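/- arXiv:2504.04952 — 11 statements merged into one kernel-verified Lean document; each statement's English description precedes it below -/
import Mathlib

section
/- Let n ≥ 2 and j ∈ {1,…,n−1}. If ζ ∈ T_j^n, then lim_{s→0⁺} s^{n−j} ∫_s^∞ ζ(t) dt = 0. (Here for every s > 0 the integral ∫_s^∞ ζ(t) dt is finite, since ζ is continuous with bounded support.) -/
open MeasureTheory Filter Set

/-- A function `ζ : (0,∞) → ℝ` (modeled as `ℝ → ℝ`, values on nonpositive reals irrelevant)
has bounded support. -/
def BddSupp (ζ : ℝ → ℝ) : Prop := ∃ R : ℝ, ∀ s, R ≤ s → ζ s = 0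

/-- `ζ ∈ T_j^n`: continuous on `(0,∞)` with bounded support and
`lim_{s → 0⁺} s^(n-j+1) ζ(s) = 0`. -/
def MemT (n j : ℕ) (ζ : ℝ → ℝ) : Prop :=
  ContinuousOn ζ (Set.Ioi 0) ∧ BddSupp ζ ∧
    Tendsto (fun s => s ^ (n - j + 1) * ζ s) (nhdsWithin 0 (Set.Ioi 0)) (nhds 0)

/-- A function continuous on `(0,∞)` with bounded support is integrable on `(s,∞)`, `s > 0`. -/
theorem integrableOn_Ioi_of_bddSupp {ζ : ℝ → ℝ} (hc : ContinuousOn ζ (Ioi 0)) (hb : BddSupp ζ)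
    {s : ℝ} (hs : 0 < s) : IntegrableOn ζ (Ioi s) := by
  obtain ⟨R, hR⟩ := hb
  have h_left : IntegrableOn ζ (Icc s R) :=
    (hc.mono fun t ht => lt_of_lt_of_le hs ht.1).integrableOn_Icc
  have h_right : IntegrableOn ζ (Ici R) :=
    integrableOn_zero.congr_fun (fun t ht => (hR t ht).symm) measurableSet_Ici
  refine (h_left.union h_right).mono_set fun t ht => ?_
  rcases le_total t R with h | h
  · exact Or.inl ⟨le_of_lt ht, h⟩
  · exact Or.inr h

/-- If `t ^ (k + 1) * |ζ t| ≤ c` on `(s, δ]`, then `s ^ k * |∫_s^δ ζ| ≤ c`. -/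
theorem pow_mul_abs_integral_le {ζ : ℝ → ℝ} {k : ℕ} (hk : 1 ≤ k) {c s δ : ℝ} (hc : 0 ≤ c)
    (hs : 0 < s) (hsδ : s ≤ δ) (h : ∀ t ∈ Ioc s δ, t ^ (k + 1) * |ζ t| ≤ c) :
    s ^ k * |∫ t in s..δ, ζ t| ≤ c := by
  have hδ : 0 < δ := hs.trans_le hsδ
  have h_zero : (0 : ℝ) ∉ uIcc s δ := notMem_uIcc_of_lt hs hδ
  have h_bound : |∫ t in s..δ, ζ t| ≤ ∫ t in s..δ, c * t ^ (-(k + 1 : ℤ)) := by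
    rw [← Real.norm_eq_abs]
    refine intervalIntegral.norm_integral_le_of_norm_le hsδ (ae_of_all _ fun t ht => ?_)
      ((intervalIntegral.intervalIntegrable_zpow (Or.inr h_zero)).const_mul c)
    have ht_pos : 0 < t := hs.trans ht.1
    rw [zpow_neg, ← div_eq_mul_inv, le_div_iff₀ (by positivity), mul_comm, Real.norm_eq_abs]
    exact_mod_cast h t ht
  have h_eval : ∫ t in s..δ, c * t ^ (-(k + 1 : ℤ)) = c * (((s ^ k)⁻¹ - (δ ^ k)⁻¹) / k) := by
    rw [intervalIntegral.integral_const_mul, integral_zpow (Or.inr ⟨by lia, h_zero⟩)]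
    have h_exp : (-(k + 1 : ℤ) + 1) = -(k : ℤ) := by ring
    rw [h_exp, zpow_neg, zpow_neg, zpow_natCast, zpow_natCast]
    push_cast
    rw [← neg_div_neg_eq]
    congr 2 <;> ring
  have hk_one : (1 : ℝ) ≤ k := by exact_mod_cast hk
  have h_div : ((s ^ k)⁻¹ - (δ ^ k)⁻¹) / k ≤ (s ^ k)⁻¹ := by
    rw [div_le_iff₀ (by linarith)]
    have h_inv_s : 0 < (s ^ k)⁻¹ := by positivity
    have h_inv_δ : 0 < (δ ^ k)⁻¹ := by positivity
    nlinarith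
  calc s ^ k * |∫ t in s..δ, ζ t| ≤ s ^ k * (c * (s ^ k)⁻¹) := by
        gcongr
        exact (h_bound.trans_eq h_eval).trans (mul_le_mul_of_nonneg_left h_div hc)
    _ = c := by field_simp

theorem stmt0 (n j : ℕ) (hn : 2 ≤ n) (hj : 1 ≤ j) (hjn : j ≤ n - 1)
    (ζ : ℝ → ℝ) (hζ : MemT n j ζ) :
    Tendsto (fun s => s ^ (n - j) * ∫ t in Set.Ioi s, ζ t)
      (nhdsWithin 0 (Set.Ioi 0)) (nhds 0) := by
  obtain ⟨h_cont, h_supp, h_lim⟩ := hζ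
  have hk : 1 ≤ n - j := by lia
  generalize n - j = k at h_lim hk ⊢
  rw [Metric.tendsto_nhds] at h_lim ⊢
  intro ε hε
  obtain ⟨δ, hδ, h_near⟩ := mem_nhdsGT_iff_exists_Ioc_subset.1 (h_lim (ε / 2) (half_pos hε))
  replace hδ : 0 < δ := hδ
  have h_tail : Tendsto (fun s : ℝ => s ^ k * ∫ t in Ioi δ, ζ t) (nhdsWithin 0 (Ioi 0))
      (nhds 0) := by
    have h : Continuous fun s : ℝ => s ^ k * ∫ t in Ioi δ, ζ t := by fun_prop
    have h_zero := h.tendsto 0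
    rw [zero_pow (by lia), zero_mul] at h_zero
    exact h_zero.mono_left nhdsWithin_le_nhds
  filter_upwards [Metric.tendsto_nhds.1 h_tail (ε / 2) (half_pos hε), Ioc_mem_nhdsGT hδ]
    with s hs_tail hs
  rw [Real.dist_eq, sub_zero] at hs_tail ⊢
  have h_split : ∫ t in Ioi s, ζ t = (∫ t in s..δ, ζ t) + ∫ t in Ioi δ, ζ t := by
    rw [← intervalIntegral.integral_Ioi_sub_Ioi
      (integrableOn_Ioi_of_bddSupp h_cont h_supp hs.1) hs.2, sub_add_cancel]
  have h_head : s ^ k * |∫ t in s..δ, ζ t| ≤ ε / 2 := by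
    refine pow_mul_abs_integral_le hk (half_pos hε).le hs.1 hs.2 fun t ht => ?_
    have ht_pos : 0 < t := hs.1.trans ht.1
    have h_dist : dist (t ^ (k + 1) * ζ t) 0 < ε / 2 := h_near ⟨ht_pos, ht.2⟩
    rw [Real.dist_eq, sub_zero, abs_mul, abs_of_pos (by positivity)] at h_dist
    exact h_dist.le
  rw [h_split, mul_add]
  refine (abs_add_le _ _).trans_lt ?_
  rw [abs_mul, abs_of_pos (pow_pos hs.1 k)]
  linarith
end

section
/- Let n ≥ 2 and j ∈ {1,…,n−1}. If ρ : (0,∞) → ℝ is continuous with bounded support and lim_{s→0⁺} s^{n−j} ρ(s) = 0 (that is, ρ ∈ T_j^{n−1}), then lim_{s→0⁺} s^{n−j+1} ∫_s^∞ ρ(t)/t² dt = 0. -/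
open MeasureTheory Filter Set

/-- A function continuous on `(0,∞)` with a limit at `0⁺` and vanishing for large arguments
is bounded on `(0,∞)`. -/
lemma exists_abs_le_of_tendsto_nhdsGT {g : ℝ → ℝ} {l : ℝ} (hc : ContinuousOn g (Ioi 0))
    (hs : BddSupp g) (hl : Tendsto g (nhdsWithin 0 (Ioi 0)) (nhds l)) :
    ∃ C, ∀ t, 0 < t → |g t| ≤ C := by
  obtain ⟨R, hR⟩ := hs
  have hlt : ∀ᶠ t in nhdsWithin (0 : ℝ) (Ioi 0), |g t| < |l| + 1 :=
    hl.abs.eventually_lt_const (by linarith)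
  obtain ⟨δ, hδ, hsub⟩ := mem_nhdsGT_iff_exists_Ioo_subset.1 hlt
  have hδ0 : 0 < δ := hδ
  obtain ⟨C, hC⟩ := (isCompact_Icc (a := δ) (b := R)).exists_bound_of_continuousOn
    (hc.mono fun t ht => hδ0.trans_le ht.1)
  refine ⟨max (|l| + 1) C, fun t ht => ?_⟩
  rcases lt_or_ge t δ with h | h
  · exact (hsub ⟨ht, h⟩ : |g t| < |l| + 1).le.trans (le_max_left _ _)
  rcases le_or_gt t R with h' | h'
  · exact (hC t ⟨h, h'⟩).trans (le_max_right _ _)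
  · rw [hR t h'.le, abs_zero]
    exact le_max_of_le_left (by positivity)

/-- The substitution `t = s * u` in the tail integral of `ρ t / t ^ 2`. -/
lemma pow_succ_mul_integral_Ioi_div_sq (m : ℕ) (ρ : ℝ → ℝ) {s : ℝ} (hs : 0 < s) :
    s ^ (m + 1) * ∫ t in Ioi s, ρ t / t ^ 2 =
      ∫ u in Ioi (1 : ℝ), (s * u) ^ m * ρ (s * u) / u ^ (m + 2) := by
  have h := integral_comp_mul_left_Ioi (fun t => ρ t / t ^ 2) 1 hs
  rw [mul_one, smul_eq_mul, eq_inv_mul_iff_mul_eq₀ hs.ne'] at h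
  rw [← h, ← mul_assoc, ← integral_const_mul]
  refine setIntegral_congr_fun measurableSet_Ioi fun u hu => ?_
  have hu0 : 0 < u := zero_lt_one.trans hu
  field_simp
  ring

theorem stmt1 (n j : ℕ) (hn : 2 ≤ n) (hj : 1 ≤ j) (hjn : j ≤ n - 1)
    (ρ : ℝ → ℝ) (hρ : MemT (n - 1) j ρ) :
    Tendsto (fun s => s ^ (n - j + 1) * ∫ t in Set.Ioi s, ρ t / t ^ 2)
      (nhdsWithin 0 (Set.Ioi 0)) (nhds 0) := by
  obtain ⟨hc, ⟨R, hR⟩, hl⟩ := hρ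
  rw [show n - 1 - j + 1 = n - j by omega] at hl
  generalize n - j = m at hl ⊢
  have hgc : ContinuousOn (fun t => t ^ m * ρ t) (Ioi 0) := by fun_prop
  obtain ⟨C, hC⟩ := exists_abs_le_of_tendsto_nhdsGT hgc
    ⟨R, fun t ht => by simp [hR t ht]⟩ hl
  have hC0 : 0 ≤ C := (abs_nonneg _).trans (hC 1 one_pos)
  refine Tendsto.congr' (eventually_nhdsWithin_of_forall fun s hs =>
    (pow_succ_mul_integral_Ioi_div_sq m ρ hs).symm) ?_
  suffices h : Tendsto (fun s => ∫ u in Ioi (1 : ℝ), (s * u) ^ m * ρ (s * u) / u ^ (m + 2))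
      (nhdsWithin 0 (Ioi 0)) (nhds (∫ _ in Ioi (1 : ℝ), 0)) by
    rwa [integral_zero] at h
  refine tendsto_integral_filter_of_dominated_convergence (fun u => C * u ^ (-2 : ℝ)) ?_ ?_
    ((integrableOn_Ioi_rpow_of_lt (by norm_num) one_pos).const_mul C) ?_
  · filter_upwards [self_mem_nhdsWithin] with s hs
    refine ContinuousOn.aestronglyMeasurable ?_ measurableSet_Ioi
    refine ContinuousOn.div (hgc.comp (by fun_prop) fun u hu => ?_) (by fun_prop) fun u hu => ?_
    · exact mul_pos hs (zero_lt_one.trans (mem_Ioi.1 hu))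
    · exact (pow_pos (zero_lt_one.trans (mem_Ioi.1 hu)) _).ne'
  · filter_upwards [self_mem_nhdsWithin] with s hs
    refine ae_restrict_of_forall_mem measurableSet_Ioi fun u hu => ?_
    have hu1 : 1 < u := hu
    have hu0 : 0 < u := zero_lt_one.trans hu1
    rw [Real.norm_eq_abs, abs_div, abs_of_pos (pow_pos hu0 (m + 2)), Real.rpow_neg hu0.le,
      Real.rpow_two, ← div_eq_mul_inv]
    exact div_le_div₀ hC0 (hC _ (mul_pos hs hu0)) (by positivity)
      (pow_le_pow_right₀ hu1.le (by omega))
  · refine ae_restrict_of_forall_mem measurableSet_Ioi fun u hu => ?_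
    have hu0 : 0 < u := zero_lt_one.trans hu
    have hsu : Tendsto (fun s => s * u) (nhdsWithin 0 (Ioi 0)) (nhdsWithin 0 (Ioi 0)) := by
      refine tendsto_nhdsWithin_iff.2 ⟨?_, eventually_nhdsWithin_of_forall fun s hs =>
        mul_pos hs hu0⟩
      simpa using ((continuous_mul_const u).tendsto 0).mono_left nhdsWithin_le_nhds
    simpa using (hl.comp hsu).div_const (u ^ (m + 2))
end

section
/- Let ζ : (0,∞) → ℝ be continuous with bounded support and define 𝒯ζ(s) = √(1+s²) ζ(s) + ∫_s^∞ t ζ(t)/√(1+t²) dt for s > 0. Then for every integer l ≥ 1 the l-fold iterate satisfies 𝒯^l ζ(s) = (1+s²)^{l/2} ζ(s) + l ∫_s^∞ t (1+t²)^{l/2−1} ζ(t) dt for every s > 0. -/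
open MeasureTheory Filter Set

/-- The transform `𝒯ζ(s) = √(1+s²) ζ(s) + ∫_s^∞ t ζ(t)/√(1+t²) dt`. -/
noncomputable def Tcal (ζ : ℝ → ℝ) : ℝ → ℝ :=
  fun s => Real.sqrt (1 + s ^ 2) * ζ s + ∫ t in Set.Ioi s, t * ζ t / Real.sqrt (1 + t ^ 2)

/-- The integral over `(s, ∞)` of a function vanishing on `[R, ∞)` is an interval integral. -/
lemma setIntegral_Ioi_eq_intervalIntegral {f : ℝ → ℝ} {s R : ℝ} (hsR : s ≤ R)
    (hf : ∀ t, R ≤ t → f t = 0) : ∫ t in Ioi s, f t = ∫ t in s..R, f t := by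
  rw [intervalIntegral.integral_of_le hsR]
  refine (setIntegral_eq_of_subset_of_forall_sdiff_eq_zero measurableSet_Ioi
    Ioc_subset_Ioi_self fun t ht => hf t ?_)
  by_contra! h
  exact ht.2 ⟨ht.1, h.le⟩

lemma hasDerivAt_sqrt_one_add_sq (t : ℝ) :
    HasDerivAt (fun t : ℝ => √(1 + t ^ 2)) (t / √(1 + t ^ 2)) t := by
  have h : HasDerivAt (fun t : ℝ => 1 + t ^ 2) (2 * t) t := by
    simpa using (hasDerivAt_pow 2 t).const_add 1
  convert h.sqrt (by positivity) using 1
  field_simp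

/-- Integration by parts against a tail integral, with weight `√(1 + t²)`. -/
lemma integral_div_sqrt_mul_tail {g : ℝ → ℝ} (hg : ContinuousOn g (Ioi 0)) {s R : ℝ}
    (hs : 0 < s) (hsR : s ≤ R) :
    IntervalIntegrable (fun t => t / √(1 + t ^ 2) * ∫ x in t..R, g x) volume s R ∧
    ∫ t in s..R, t / √(1 + t ^ 2) * ∫ x in t..R, g x =
      (∫ t in s..R, √(1 + t ^ 2) * g t) - √(1 + s ^ 2) * ∫ x in s..R, g x := by
  have hpos : ∀ {a}, 0 < a → uIcc a R ⊆ Ioi 0 := fun ha x hx =>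
    lt_of_lt_of_le (lt_min ha (hs.trans_le hsR)) hx.1
  have hsub := hpos hs
  have hG : ∀ t ∈ uIcc s R, HasDerivAt (fun t => ∫ x in t..R, g x) (-g t) t := fun t ht =>
    intervalIntegral.integral_hasDerivAt_left
      ((hg.mono (hpos (hsub ht))).intervalIntegrable)
      (hg.stronglyMeasurableAtFilter isOpen_Ioi t (hsub ht))
      (hg.continuousAt (Ioi_mem_nhds (hsub ht)))
  have hw : Continuous fun t : ℝ => √(1 + t ^ 2) := by fun_prop
  have hw' : Continuous fun t : ℝ => t / √(1 + t ^ 2) :=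
    continuous_id.div hw fun t => by positivity
  have hGc : ContinuousOn (fun t => ∫ x in t..R, g x) (uIcc s R) := fun t ht =>
    (hG t ht).continuousAt.continuousWithinAt
  have h₁ : IntervalIntegrable (fun t => t / √(1 + t ^ 2) * ∫ x in t..R, g x) volume s R :=
    (hw'.continuousOn.mul hGc).intervalIntegrable
  have h₂ : IntervalIntegrable (fun t => √(1 + t ^ 2) * g t) volume s R :=
    (hw.continuousOn.mul (hg.mono hsub)).intervalIntegrable
  refine ⟨h₁, ?_⟩
  have key := intervalIntegral.integral_eq_sub_of_hasDerivAt
    (f := fun t => √(1 + t ^ 2) * ∫ x in t..R, g x)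
    (f' := fun t => t / √(1 + t ^ 2) * (∫ x in t..R, g x) - √(1 + t ^ 2) * g t)
    (fun t ht => by
      rw [sub_eq_add_neg, ← mul_neg]
      exact (hasDerivAt_sqrt_one_add_sq t).mul (hG t ht)) (h₁.sub h₂)
  rw [intervalIntegral.integral_sub h₁ h₂, intervalIntegral.integral_same] at key
  linarith

lemma iterate_Tcal_apply {ζ : ℝ → ℝ} (hc : ContinuousOn ζ (Ioi 0)) (hb : BddSupp ζ)
    (l : ℕ) {s : ℝ} (hs : 0 < s) :
    Tcal^[l] ζ s =
      (1 + s ^ 2) ^ ((l : ℝ) / 2) * ζ s +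
        l * ∫ t in Ioi s, t * (1 + t ^ 2) ^ ((l : ℝ) / 2 - 1) * ζ t := by
  induction l generalizing s with
  | zero => simp
  | succ l ih =>
    obtain ⟨R₀, hR₀⟩ := hb
    obtain ⟨R, hsR, hR⟩ : ∃ R, s ≤ R ∧ ∀ t, R ≤ t → ζ t = 0 :=
      ⟨max R₀ s, le_max_right _ _, fun t ht => hR₀ t ((le_max_left _ _).trans ht)⟩
    have hw : ∀ t : ℝ, 0 < 1 + t ^ 2 := fun t => by positivity
    have hpow : ∀ a : ℝ, Continuous fun t : ℝ => (1 + t ^ 2) ^ a := fun a =>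
      Continuous.rpow_const (by fun_prop) fun t => Or.inl (hw t).ne'
    have hsub : uIcc s R ⊆ Ioi 0 := fun x hx =>
      lt_of_lt_of_le (lt_min hs (hs.trans_le hsR)) hx.1
    set g : ℝ → ℝ := fun t => t * (1 + t ^ 2) ^ ((l : ℝ) / 2 - 1) * ζ t with hgdef
    set k : ℝ → ℝ := fun t => t * (1 + t ^ 2) ^ (((l + 1 : ℕ) : ℝ) / 2 - 1) * ζ t with hkdef
    have hg : ContinuousOn g (Ioi 0) := (continuous_id.mul (hpow _)).continuousOn.mul hc
    have hk : ContinuousOn k (Ioi 0) := (continuous_id.mul (hpow _)).continuousOn.mul hc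
    have hg0 : ∀ t, R ≤ t → g t = 0 := fun t ht => by simp [hgdef, hR t ht]
    have hk0 : ∀ t, R ≤ t → k t = 0 := fun t ht => by simp [hkdef, hR t ht]
    have hgk : ∀ t, √(1 + t ^ 2) * g t = k t := fun t => by
      have : (1 + t ^ 2) ^ (((l + 1 : ℕ) : ℝ) / 2 - 1) =
          √(1 + t ^ 2) * (1 + t ^ 2) ^ ((l : ℝ) / 2 - 1) := by
        rw [Real.sqrt_eq_rpow, ← Real.rpow_add (hw t)]
        congr 1
        push_cast
        ring
      simp only [hgdef, hkdef, this]
      ring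
    have hdiv : ∀ t, t * ((1 + t ^ 2) ^ ((l : ℝ) / 2) * ζ t) / √(1 + t ^ 2) = k t := fun t => by
      have : (1 + t ^ 2) ^ ((l : ℝ) / 2) =
          √(1 + t ^ 2) * (1 + t ^ 2) ^ (((l + 1 : ℕ) : ℝ) / 2 - 1) := by
        rw [Real.sqrt_eq_rpow, ← Real.rpow_add (hw t)]
        congr 1
        push_cast
        ring
      have hne : √(1 + t ^ 2) ≠ 0 := (Real.sqrt_pos.2 (hw t)).ne'
      simp only [hkdef, this]
      field_simp
    have hlead : √(1 + s ^ 2) * (1 + s ^ 2) ^ ((l : ℝ) / 2) =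
        (1 + s ^ 2) ^ (((l + 1 : ℕ) : ℝ) / 2) := by
      rw [Real.sqrt_eq_rpow, ← Real.rpow_add (hw s)]
      congr 1
      push_cast
      ring
    have hint : ∫ t in Ioi s, t * Tcal^[l] ζ t / √(1 + t ^ 2) =
        ∫ t in s..R, (k t + l * (t / √(1 + t ^ 2) * ∫ x in t..R, g x)) := by
      have h0 : ∀ t, R ≤ t → t * Tcal^[l] ζ t / √(1 + t ^ 2) = 0 := fun t hRt => by
        have : ∫ x in Ioi t, g x = 0 :=
          setIntegral_eq_zero_of_forall_eq_zero fun x hx => hg0 x (hRt.trans (le_of_lt hx))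
        rw [ih (hs.trans_le (hsR.trans hRt)), this, hR t hRt]
        simp
      rw [setIntegral_Ioi_eq_intervalIntegral hsR h0]
      refine intervalIntegral.integral_congr fun t ht => ?_
      rw [uIcc_of_le hsR] at ht
      rw [ih (hs.trans_le ht.1), setIntegral_Ioi_eq_intervalIntegral ht.2 hg0, ← hdiv t]
      ring
    obtain ⟨hI, hparts⟩ := integral_div_sqrt_mul_tail hg hs hsR
    rw [Function.iterate_succ_apply', Tcal, hint, ih hs,
      setIntegral_Ioi_eq_intervalIntegral hsR hg0, setIntegral_Ioi_eq_intervalIntegral hsR hk0,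
      intervalIntegral.integral_add (hk.mono hsub).intervalIntegrable (hI.const_mul _),
      intervalIntegral.integral_const_mul, hparts, ← hlead]
    simp only [hgk]
    push_cast
    ring

theorem stmt3 (ζ : ℝ → ℝ) (hc : ContinuousOn ζ (Set.Ioi 0)) (hb : BddSupp ζ)
    (l : ℕ) (hl : 1 ≤ l) (s : ℝ) (hs : 0 < s) :
    Tcal^[l] ζ s =
      (1 + s ^ 2) ^ ((l : ℝ) / 2) * ζ s +
        l * ∫ t in Set.Ioi s, t * (1 + t ^ 2) ^ ((l : ℝ) / 2 - 1) * ζ t :=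
  iterate_Tcal_apply hc hb l hs
end

section
/- Let n ≥ 1, j ∈ {1,…,n} and ζ ∈ T_j^n. Then for every integer m ∈ ℤ, lim_{s→0⁺} s^{n−j+1} ∫_s^∞ t (1+t²)^{m/2−1} ζ(t) dt = 0. -/
open MeasureTheory Filter Set

/-- If `F` is continuous on `(0, ∞)`, vanishes far out and `t ^ k * F t → 0` as `t → 0⁺`, then
`t ^ k * F t` is bounded on `(0, ∞)`. -/
theorem exists_bound_pow_mul_of_tendsto_zero {k : ℕ} {F : ℝ → ℝ} {R : ℝ}
    (hF : ContinuousOn F (Ioi 0)) (hR : ∀ t, R ≤ t → F t = 0)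
    (h0 : Tendsto (fun t => t ^ k * F t) (nhdsWithin 0 (Ioi 0)) (nhds 0)) :
    ∃ C : ℝ, ∀ t, 0 < t → ‖t ^ k * F t‖ ≤ C := by
  have hnear : ∀ᶠ t in nhdsWithin (0 : ℝ) (Ioi 0), ‖t ^ k * F t‖ < 1 :=
    h0.norm.eventually_lt_const (by simp)
  obtain ⟨δ, hδ, hδ1⟩ := mem_nhdsGT_iff_exists_Ioo_subset.1 hnear
  have hcont : ContinuousOn (fun t => t ^ k * F t) (Icc δ R) :=
    (continuous_pow k).continuousOn.mul (hF.mono fun t ht => lt_of_lt_of_le hδ ht.1)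
  obtain ⟨C, hC⟩ := isCompact_Icc.exists_bound_of_continuousOn hcont
  refine ⟨max 1 C, fun t ht => ?_⟩
  rcases lt_or_ge t δ with htδ | htδ
  · exact le_max_of_le_left (le_of_lt (hδ1 ⟨ht, htδ⟩))
  rcases le_total t R with htR | htR
  · exact le_max_of_le_right (hC t ⟨htδ, htR⟩)
  · simp [hR t htR]

/-- If `F` is continuous on `(0, ∞)`, vanishes far out and `t ^ k * F t → 0` as `t → 0⁺` with
`k ≠ 0`, then the tail integrals satisfy `s ^ k * ∫ t in Ioi s, F t → 0` as `s → 0⁺`. -/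
theorem tendsto_pow_mul_integral_Ioi_zero {k : ℕ} (hk : k ≠ 0) {F : ℝ → ℝ} {R : ℝ}
    (hF : ContinuousOn F (Ioi 0)) (hR : ∀ t, R ≤ t → F t = 0)
    (h0 : Tendsto (fun t => t ^ k * F t) (nhdsWithin 0 (Ioi 0)) (nhds 0)) :
    Tendsto (fun s => s ^ k * ∫ t in Ioi s, F t) (nhdsWithin 0 (Ioi 0)) (nhds 0) := by
  obtain ⟨C, hC⟩ := exists_bound_pow_mul_of_tendsto_zero hF hR h0
  have hC0 : 0 ≤ C := (norm_nonneg _).trans (hC 1 one_pos)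
  have key : Tendsto (fun s => ∫ t, (Ioi s).indicator (fun t => s ^ k * F t) t)
      (nhdsWithin 0 (Ioi 0)) (nhds (∫ _ : ℝ, (0 : ℝ))) := by
    refine tendsto_integral_filter_of_dominated_convergence
      ((Ioc 0 R).indicator fun _ => C) ?_ ?_ ?_ ?_
    · filter_upwards [self_mem_nhdsWithin] with s hs
      refine AEStronglyMeasurable.indicator₀ ?_ measurableSet_Ioi.nullMeasurableSet |>.congr
        (ae_of_all _ fun t => ?_) (f := (Ioi s).indicator fun t => s ^ k * (Ioi s).indicator F t)
      · refine AEStronglyMeasurable.const_mul ?_ _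
        exact (aestronglyMeasurable_indicator_iff measurableSet_Ioi).2
          ((hF.mono (Ioi_subset_Ioi (le_of_lt hs))).aestronglyMeasurable measurableSet_Ioi)
      · by_cases ht : t ∈ Ioi s <;> simp [ht]
    · filter_upwards [self_mem_nhdsWithin] with s hs
      refine ae_of_all _ fun t => ?_
      have hs0 : 0 < s := hs
      by_cases hst : s < t
      · have ht0 : 0 < t := hs0.trans hst
        rw [indicator_of_mem (show t ∈ Ioi s from hst)]
        by_cases htR : t ≤ R
        · rw [indicator_of_mem (show t ∈ Ioc 0 R from ⟨ht0, htR⟩)]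
          refine le_trans ?_ (hC t ht0)
          rw [norm_mul, norm_mul, norm_pow, norm_pow, Real.norm_of_nonneg hs0.le,
            Real.norm_of_nonneg ht0.le]
          gcongr
        · rw [hR t (le_of_not_ge htR), mul_zero, norm_zero]
          exact indicator_nonneg (fun _ _ => hC0) t
      · rw [indicator_of_notMem (show t ∉ Ioi s from hst), norm_zero]
        exact indicator_nonneg (fun _ _ => hC0) t
    · exact (integrable_indicator_iff measurableSet_Ioc).2
        (integrableOn_const measure_Ioc_lt_top.ne)
    · refine ae_of_all _ fun t => ?_
      have hlim : Tendsto (fun s : ℝ => s ^ k * F t) (nhdsWithin 0 (Ioi 0)) (nhds 0) := by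
        have h : Continuous fun s : ℝ => s ^ k * F t := by fun_prop
        simpa [hk] using (h.tendsto 0).mono_left nhdsWithin_le_nhds
      refine squeeze_zero_norm (fun s => ?_) (tendsto_zero_iff_norm_tendsto_zero.1 hlim)
      exact norm_indicator_le_norm_self (fun t => s ^ k * F t) t
  simpa [integral_indicator measurableSet_Ioi, integral_const_mul] using key

theorem stmt4 (n j : ℕ) (hn : 1 ≤ n) (hj1 : 1 ≤ j) (hjn : j ≤ n)
    (ζ : ℝ → ℝ) (hζ : MemT n j ζ) (m : ℤ) :
    Tendsto
      (fun s => s ^ (n - j + 1) * ∫ t in Set.Ioi s, t * (1 + t ^ 2) ^ ((m : ℝ) / 2 - 1) * ζ t)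
      (nhdsWithin 0 (Set.Ioi 0)) (nhds 0) := by
  obtain ⟨hcont, ⟨R, hR⟩, hlim⟩ := hζ
  have hw : Continuous fun t : ℝ => t * (1 + t ^ 2) ^ ((m : ℝ) / 2 - 1) :=
    continuous_id.mul ((by fun_prop : Continuous fun t : ℝ => 1 + t ^ 2).rpow_const
      fun t => Or.inl (by positivity))
  refine tendsto_pow_mul_integral_Ioi_zero (Nat.succ_ne_zero _) (R := R)
    (hw.continuousOn.mul hcont) (fun t ht => by rw [hR t ht, mul_zero]) ?_
  have h := ((hw.tendsto 0).mono_left nhdsWithin_le_nhds).mul hlim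
  rw [mul_zero] at h
  exact h.congr fun t => mul_left_comm _ _ _
end

section
/- Let n ≥ 1, j ∈ {1,…,n} and let l ≥ 1 be an integer. The map which sends ζ : (0,∞) → ℝ to the function s ↦ (1+s²)^{l/2} ζ(s) + l ∫_s^∞ t (1+t²)^{l/2−1} ζ(t) dt is a bijection from T_j^n onto T_j^n, and its inverse sends ρ ∈ T_j^n to the function s ↦ ρ(s)/(1+s²)^{l/2} − l ∫_s^∞ t ρ(t)/(1+t²)^{l/2+1} dt. -/
open MeasureTheory Filter Set

/-- The transform `𝒯^l ζ(s) = (1+s²)^(l/2) ζ(s) + l ∫_s^∞ t (1+t²)^(l/2−1) ζ(t) dt`. -/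
noncomputable def Tl (l : ℕ) (ζ : ℝ → ℝ) : ℝ → ℝ :=
  fun s => (1 + s ^ 2) ^ ((l : ℝ) / 2) * ζ s +
    l * ∫ t in Set.Ioi s, t * (1 + t ^ 2) ^ ((l : ℝ) / 2 - 1) * ζ t

/-- The inverse transform `𝒯^{-l} ρ(s) = ρ(s)/(1+s²)^(l/2) − l ∫_s^∞ t ρ(t)/(1+t²)^(l/2+1) dt`. -/
noncomputable def TlInv (l : ℕ) (ρ : ℝ → ℝ) : ℝ → ℝ :=
  fun s => ρ s / (1 + s ^ 2) ^ ((l : ℝ) / 2) -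
    l * ∫ t in Set.Ioi s, t * ρ t / (1 + t ^ 2) ^ ((l : ℝ) / 2 + 1)

open Topology

theorem setIntegral_Ioi_eq_zero_of_le {f : ℝ → ℝ} {R s : ℝ} (hf : ∀ t, R ≤ t → f t = 0)
    (hs : R ≤ s) : ∫ t in Ioi s, f t = 0 := by
  rw [setIntegral_congr_fun measurableSet_Ioi
    (fun t (ht : s < t) => hf t (hs.trans ht.le)), integral_zero]

theorem BddSupp.exists_pos {ζ : ℝ → ℝ} (h : BddSupp ζ) :
    ∃ R : ℝ, 0 < R ∧ ∀ s, R ≤ s → ζ s = 0 := by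
  obtain ⟨R, hR⟩ := h
  exact ⟨max R 1, by positivity, fun s hs => hR s ((le_max_left _ _).trans hs)⟩

theorem BddSupp.mul_left {ζ : ℝ → ℝ} (h : BddSupp ζ) (w : ℝ → ℝ) :
    BddSupp (fun t => w t * ζ t) := by
  obtain ⟨R, hR⟩ := h
  exact ⟨R, fun s hs => by simp [hR s hs]⟩

theorem BddSupp.setIntegral_Ioi {f : ℝ → ℝ} (h : BddSupp f) :
    BddSupp (fun s => ∫ t in Ioi s, f t) := by
  obtain ⟨R, hR⟩ := h
  exact ⟨R, fun s hs => setIntegral_Ioi_eq_zero_of_le hR hs⟩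

theorem BddSupp.integrableOn_Ioi {f : ℝ → ℝ} (h : BddSupp f) (hf : ContinuousOn f (Ioi 0))
    {a : ℝ} (ha : 0 < a) : IntegrableOn f (Ioi a) := by
  obtain ⟨R, hR⟩ := h
  have h1 : IntegrableOn f (Icc a R) :=
    (hf.mono fun t ht => lt_of_lt_of_le ha ht.1).integrableOn_Icc
  have h2 : IntegrableOn f (Ioi R) :=
    integrableOn_zero.congr_fun (fun t (ht : R < t) => (hR t ht.le).symm) measurableSet_Ioi
  refine (h1.union h2).mono_set fun t (ht : a < t) => ?_
  rcases le_or_gt t R with h | h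
  · exact Or.inl ⟨ht.le, h⟩
  · exact Or.inr h

theorem BddSupp.hasDerivAt_setIntegral_Ioi {f : ℝ → ℝ} (h : BddSupp f)
    (hf : ContinuousOn f (Ioi 0)) {s : ℝ} (hs : 0 < s) :
    HasDerivAt (fun u => ∫ t in Ioi u, f t) (-f s) s := by
  have hint := h.integrableOn_Ioi hf hs
  have hcont : ContinuousAt f s := hf.continuousAt (Ioi_mem_nhds hs)
  have hd : HasDerivAt (fun u => ∫ t in s..u, f t) (f s) s :=
    intervalIntegral.integral_hasDerivAt_right (by simp)
      (hf.stronglyMeasurableAtFilter isOpen_Ioi s hs) hcont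
  refine (hd.const_sub (∫ t in Ioi s, f t)).congr_of_eventuallyEq ?_
  filter_upwards [Ioi_mem_nhds hs] with u hu
  rw [← intervalIntegral.integral_Ioi_sub_Ioi' hint (h.integrableOn_Ioi hf hu)]
  ring

/-- A primitive with bounded support is recovered by integrating up to infinity. -/
theorem BddSupp.setIntegral_Ioi_eq_of_hasDerivAt {f H : ℝ → ℝ} (h : BddSupp f)
    (hf : ContinuousOn f (Ioi 0)) (hH : BddSupp H)
    (hderiv : ∀ t > 0, HasDerivAt H (-f t) t) {s : ℝ} (hs : 0 < s) :
    ∫ t in Ioi s, f t = H s := by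
  obtain ⟨R, hR⟩ := hH
  have hlim : Tendsto H atTop (𝓝 0) :=
    tendsto_const_nhds.congr' <| by
      filter_upwards [eventually_ge_atTop R] with t ht using (hR t ht).symm
  have key := integral_Ioi_of_hasDerivAt_of_tendsto' (a := s)
    (fun t (ht : s ≤ t) => hderiv t (hs.trans_le ht)) (h.integrableOn_Ioi hf hs).neg hlim
  rw [integral_neg] at key
  linarith

namespace MemT

variable {n j : ℕ} {ζ ρ : ℝ → ℝ}

theorem add (hζ : MemT n j ζ) (hρ : MemT n j ρ) : MemT n j (fun s => ζ s + ρ s) := by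
  obtain ⟨hc, ⟨R, hR⟩, hl⟩ := hζ
  obtain ⟨hc', ⟨R', hR'⟩, hl'⟩ := hρ
  refine ⟨hc.add hc', ⟨max R R', fun s hs => ?_⟩, ?_⟩
  · simp [hR s ((le_max_left _ _).trans hs), hR' s ((le_max_right _ _).trans hs)]
  · simpa [mul_add] using hl.add hl'

theorem mul_left (hζ : MemT n j ζ) {w : ℝ → ℝ} (hw : Continuous w) :
    MemT n j (fun s => w s * ζ s) := by
  obtain ⟨hc, hb, hl⟩ := hζ
  refine ⟨hw.continuousOn.mul hc, hb.mul_left w, ?_⟩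
  have := (hw.tendsto 0 |>.mono_left nhdsWithin_le_nhds).mul hl
  rw [mul_zero] at this
  exact this.congr fun s => by ring

theorem continuousOn_id_mul (hζ : MemT n j ζ) : ContinuousOn (fun t => t * ζ t) (Ioi 0) :=
  continuousOn_id.mul hζ.1

theorem bddSupp_id_mul (hζ : MemT n j ζ) : BddSupp (fun t => t * ζ t) :=
  hζ.2.1.mul_left _

theorem exists_bound (hζ : MemT n j ζ) :
    ∃ M : ℝ, ∀ t > 0, |t ^ (n - j + 1) * ζ t| ≤ M := by
  obtain ⟨hc, ⟨R, hR⟩, hl⟩ := hζ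
  obtain ⟨δ, hδ, hsub⟩ := mem_nhdsGT_iff_exists_Ioo_subset.1
    (hl.abs.eventually_lt_const (abs_zero.trans_lt one_pos))
  have hcont : ContinuousOn (fun t => t ^ (n - j + 1) * ζ t) (Icc δ R) :=
    (continuous_pow _).continuousOn.mul (hc.mono fun t ht => lt_of_lt_of_le hδ ht.1)
  obtain ⟨C, hC⟩ := isCompact_Icc.exists_bound_of_continuousOn hcont
  refine ⟨max 1 C, fun t ht => ?_⟩
  rcases lt_or_ge t δ with h | h
  · exact le_max_of_le_left (le_of_lt (hsub ⟨ht, h⟩))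
  rcases le_or_gt t R with h' | h'
  · exact le_max_of_le_right (hC t ⟨h, h'⟩)
  · simp [hR t h'.le]

theorem setIntegral_Ioi (hζ : MemT n j ζ) :
    MemT n j (fun s => ∫ t in Ioi s, t * ζ t) := by
  have hc := hζ.continuousOn_id_mul
  have hb := hζ.bddSupp_id_mul
  refine ⟨fun s hs => (hb.hasDerivAt_setIntegral_Ioi hc hs).continuousAt.continuousWithinAt,
    hb.setIntegral_Ioi, ?_⟩
  obtain ⟨M, hM⟩ := hζ.exists_bound
  obtain ⟨R, hR0, hR⟩ := hb.exists_pos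
  have hlim : Tendsto (fun s : ℝ => s * M * (R - s)) (𝓝[>] 0) (𝓝 0) := by
    have : Continuous fun s : ℝ => s * M * (R - s) := by fun_prop
    simpa using (this.tendsto 0).mono_left nhdsWithin_le_nhds
  refine squeeze_zero_norm' ?_ hlim
  filter_upwards [Ioo_mem_nhdsGT hR0] with s hs
  have hs0 : 0 < s := hs.1
  have htail : ∫ t in Ioi s, t * ζ t = ∫ t in s..R, t * ζ t := by
    rw [← intervalIntegral.integral_Ioi_sub_Ioi (hb.integrableOn_Ioi hc hs0) hs.2.le,
      setIntegral_Ioi_eq_zero_of_le hR le_rfl, sub_zero]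
  rw [htail, ← intervalIntegral.integral_const_mul, ← abs_of_pos (sub_pos.2 hs.2)]
  refine intervalIntegral.norm_integral_le_of_norm_le_const fun t ht => ?_
  rw [uIoc_of_le hs.2.le] at ht
  have ht0 : 0 < t := hs0.trans ht.1
  calc ‖s ^ (n - j + 1) * (t * ζ t)‖ = s * (s ^ (n - j) * (t * |ζ t|)) := by
        rw [Real.norm_eq_abs, abs_mul, abs_mul, abs_of_pos ht0, abs_of_pos (pow_pos hs0 _)]
        ring
    _ ≤ s * (t ^ (n - j) * (t * |ζ t|)) := by
        gcongr
        exact ht.1.le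
    _ = s * |t ^ (n - j + 1) * ζ t| := by
        rw [abs_mul, abs_of_pos (pow_pos ht0 _)]
        ring
    _ ≤ s * M := by
        gcongr
        exact hM t ht0

end MemT

theorem one_add_sq_pos (s : ℝ) : 0 < 1 + s ^ 2 := by positivity

theorem continuous_one_add_sq_rpow (p : ℝ) : Continuous fun s : ℝ => (1 + s ^ 2) ^ p :=
  (by fun_prop : Continuous fun s : ℝ => 1 + s ^ 2).rpow_const
    fun s => Or.inl (one_add_sq_pos s).ne'

theorem hasDerivAt_one_add_sq_rpow (p s : ℝ) :
    HasDerivAt (fun s : ℝ => (1 + s ^ 2) ^ p) (2 * p * s * (1 + s ^ 2) ^ (p - 1)) s := by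
  have h : HasDerivAt (fun s : ℝ => 1 + s ^ 2) (2 * s) s := by
    simpa using (hasDerivAt_pow 2 s).const_add 1
  convert! h.rpow_const (p := p) (Or.inl (one_add_sq_pos s).ne') using 1
  ring

/-- The common form `s ↦ (1+s²)^p ζ(s) + 2p ∫_s^∞ t (1+t²)^(p-1) ζ(t) dt` of the two transforms. -/
noncomputable def rpowTransform (p : ℝ) (ζ : ℝ → ℝ) (s : ℝ) : ℝ :=
  (1 + s ^ 2) ^ p * ζ s + 2 * p * ∫ t in Ioi s, t * ((1 + t ^ 2) ^ (p - 1) * ζ t)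

theorem Tl_eq_rpowTransform (l : ℕ) (ζ : ℝ → ℝ) : Tl l ζ = rpowTransform (l / 2) ζ := by
  funext s
  simp only [Tl, rpowTransform, mul_assoc]
  ring

theorem TlInv_eq_rpowTransform (l : ℕ) (ρ : ℝ → ℝ) :
    TlInv l ρ = rpowTransform (-(l / 2)) ρ := by
  funext s
  have h (t : ℝ) : t * ρ t / (1 + t ^ 2) ^ ((l : ℝ) / 2 + 1) =
      t * ((1 + t ^ 2) ^ (-((l : ℝ) / 2) - 1) * ρ t) := by
    rw [← neg_add', Real.rpow_neg (one_add_sq_pos t).le]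
    ring
  simp only [TlInv, rpowTransform, h, Real.rpow_neg (one_add_sq_pos s).le]
  ring

theorem MemT.rpowTransform {n j : ℕ} {ζ : ℝ → ℝ} (hζ : MemT n j ζ) (p : ℝ) :
    MemT n j (rpowTransform p ζ) :=
  (hζ.mul_left (continuous_one_add_sq_rpow p)).add
    ((hζ.mul_left (continuous_one_add_sq_rpow (p - 1))).setIntegral_Ioi.mul_left
      (w := fun _ => 2 * p) continuous_const)

theorem MemT.rpowTransform_neg_rpowTransform {n j : ℕ} {ζ : ℝ → ℝ} (hζ : MemT n j ζ) (p : ℝ)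
    {s : ℝ} (hs : 0 < s) : _root_.rpowTransform (-p) (_root_.rpowTransform p ζ) s = ζ s := by
  set G : ℝ → ℝ := fun s => ∫ t in Ioi s, t * ((1 + t ^ 2) ^ (p - 1) * ζ t)
  have hη := hζ.mul_left (continuous_one_add_sq_rpow (p - 1))
  have hθ := (hζ.rpowTransform p).mul_left (continuous_one_add_sq_rpow (-p - 1))
  have hdG (t : ℝ) (ht : 0 < t) : HasDerivAt G (-(t * ((1 + t ^ 2) ^ (p - 1) * ζ t))) t :=
    hη.bddSupp_id_mul.hasDerivAt_setIntegral_Ioi hη.continuousOn_id_mul ht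
  have hval (t : ℝ) : _root_.rpowTransform p ζ t = (1 + t ^ 2) ^ p * ζ t + 2 * p * G t := rfl
  have hint : ∫ t in Ioi s, t * ((1 + t ^ 2) ^ (-p - 1) * _root_.rpowTransform p ζ t) =
      (1 + s ^ 2) ^ (-p) * G s := by
    refine hθ.bddSupp_id_mul.setIntegral_Ioi_eq_of_hasDerivAt hθ.continuousOn_id_mul
      (H := fun t => (1 + t ^ 2) ^ (-p) * G t)
      (hη.bddSupp_id_mul.setIntegral_Ioi.mul_left _) (fun t ht => ?_) hs
    convert! (hasDerivAt_one_add_sq_rpow (-p) t).mul (hdG t ht) using 1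
    have hp := one_add_sq_pos t
    rw [hval, Real.rpow_sub_one hp.ne', Real.rpow_sub_one hp.ne', Real.rpow_neg hp.le]
    have := (Real.rpow_pos_of_pos hp p).ne'
    field_simp
    ring
  have hp := one_add_sq_pos s
  rw [_root_.rpowTransform, hint, hval, Real.rpow_neg hp.le]
  have := (Real.rpow_pos_of_pos hp p).ne'
  field_simp
  ring

theorem stmt5 (n j l : ℕ) (hn : 1 ≤ n) (hj1 : 1 ≤ j) (hjn : j ≤ n) (hl : 1 ≤ l) :
    (∀ ζ, MemT n j ζ → MemT n j (Tl l ζ)) ∧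
    (∀ ρ, MemT n j ρ → MemT n j (TlInv l ρ)) ∧
    (∀ ζ, MemT n j ζ → ∀ s > (0:ℝ), TlInv l (Tl l ζ) s = ζ s) ∧
    (∀ ρ, MemT n j ρ → ∀ s > (0:ℝ), Tl l (TlInv l ρ) s = ρ s) := by
  simp only [Tl_eq_rpowTransform, TlInv_eq_rpowTransform]
  refine ⟨fun ζ h => h.rpowTransform _, fun ρ h => h.rpowTransform _,
    fun ζ h s hs => h.rpowTransform_neg_rpowTransform _ hs, fun ρ h s hs => ?_⟩
  simpa using h.rpowTransform_neg_rpowTransform (-(l / 2 : ℝ)) hs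
end

section
/- Let ζ : (0,∞) → ℝ be continuous with bounded support and let l ≥ 1 be an integer. Then for every s > 0: l² ∫_s^∞ (t/(1+t²)^{l/2+1}) (∫_t^∞ r (1+r²)^{l/2−1} ζ(r) dr) dt = l (1+s²)^{−l/2} ∫_s^∞ t (1+t²)^{l/2−1} ζ(t) dt − l ∫_s^∞ t ζ(t)/(1+t²) dt. -/
open MeasureTheory Filter Set

/-- An integral over `(t, ∞)` of a function vanishing on `[R, ∞)` is an interval integral. -/
theorem integral_Ioi_eq_intervalIntegral_of_eq_zero {f : ℝ → ℝ} {t R : ℝ} (htR : t ≤ R)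
    (hf : ∀ x, R ≤ x → f x = 0) : ∫ x in Ioi t, f x = ∫ x in t..R, f x := by
  rw [intervalIntegral.integral_of_le htR]
  refine setIntegral_eq_of_subset_of_forall_sdiff_eq_zero measurableSet_Ioi
    Ioc_subset_Ioi_self fun x hx => hf x ?_
  by_contra! h
  exact hx.2 ⟨hx.1, h.le⟩

theorem hasDerivAt_neg_one_add_sq_rpow (a t : ℝ) :
    HasDerivAt (fun t : ℝ => -(1 + t ^ 2) ^ (-(a / 2))) (a * (t / (1 + t ^ 2) ^ (a / 2 + 1))) t := by
  have hpos : 0 < 1 + t ^ 2 := by positivity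
  have h := (((hasDerivAt_pow 2 t).const_add 1).rpow_const (p := -(a / 2)) (Or.inl hpos.ne')).neg
  refine h.congr_deriv ?_
  rw [show -(a / 2) - 1 = -(a / 2 + 1) by ring, Real.rpow_neg hpos.le]
  push_cast
  ring

/-- Integration by parts against the tail integral of a function continuous on `(0, ∞)`. -/
theorem integral_deriv_mul_tail_integral {u u' g : ℝ → ℝ} {s R : ℝ} (hs : 0 < s) (hsR : s ≤ R)
    (hu : ∀ t, HasDerivAt u (u' t) t) (hu' : Continuous u') (hg : ContinuousOn g (Ioi 0)) :
    ∫ t in s..R, u' t * ∫ r in t..R, g r =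
      -u s * (∫ r in s..R, g r) + ∫ t in s..R, u t * g t := by
  have hsub : uIcc s R ⊆ Ioi 0 := by
    rw [uIcc_of_le hsR]
    exact fun x hx => hs.trans_le hx.1
  have hG : ∀ t ∈ uIcc s R, HasDerivAt (fun t => ∫ r in t..R, g r) (-g t) t := by
    intro t ht
    have ht0 : t ∈ Ioi (0 : ℝ) := hsub ht
    refine intervalIntegral.integral_hasDerivAt_left ?_
      (hg.stronglyMeasurableAtFilter isOpen_Ioi t ht0)
      (hg.continuousAt (isOpen_Ioi.mem_nhds ht0))
    exact (hg.mono ((uIcc_subset_uIcc ht right_mem_uIcc).trans hsub)).intervalIntegrable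
  have h := intervalIntegral.integral_mul_deriv_eq_deriv_mul (fun t _ => hu t) hG
    (hu'.intervalIntegrable s R) (hg.mono hsub).neg.intervalIntegrable
  simp only [mul_neg, intervalIntegral.integral_neg, intervalIntegral.integral_same] at h
  linarith

theorem stmt6 (ζ : ℝ → ℝ) (hc : ContinuousOn ζ (Set.Ioi 0)) (hb : BddSupp ζ)
    (l : ℕ) (hl : 1 ≤ l) (s : ℝ) (hs : 0 < s) :
    (l : ℝ) ^ 2 *
        ∫ t in Set.Ioi s, t / (1 + t ^ 2) ^ ((l : ℝ) / 2 + 1) *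
          ∫ r in Set.Ioi t, r * (1 + r ^ 2) ^ ((l : ℝ) / 2 - 1) * ζ r =
      (l : ℝ) * (1 + s ^ 2) ^ (-((l : ℝ) / 2)) *
          (∫ t in Set.Ioi s, t * (1 + t ^ 2) ^ ((l : ℝ) / 2 - 1) * ζ t) -
        (l : ℝ) * ∫ t in Set.Ioi s, t * ζ t / (1 + t ^ 2) := by
  obtain ⟨R₀, hR₀⟩ := hb
  obtain ⟨R, hsR, hRR⟩ : ∃ R, s ≤ R ∧ R₀ ≤ R := ⟨max s R₀, le_max_left _ _, le_max_right _ _⟩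
  have hζ : ∀ x, R ≤ x → ζ x = 0 := fun x hx => hR₀ x (hRR.trans hx)
  have hpos : ∀ t : ℝ, 0 < 1 + t ^ 2 := fun t => by positivity
  have hpow : ∀ p : ℝ, Continuous fun t : ℝ => (1 + t ^ 2) ^ p := fun p =>
    Continuous.rpow_const (by fun_prop) fun t => Or.inl (hpos t).ne'
  set g : ℝ → ℝ := fun r => r * (1 + r ^ 2) ^ ((l : ℝ) / 2 - 1) * ζ r with hg
  have hg0 : ∀ x, R ≤ x → g x = 0 := fun x hx => by simp [hg, hζ x hx]
  have hgc : ContinuousOn g (Ioi 0) := (continuous_id.mul (hpow _)).continuousOn.mul hc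
  have hparts := integral_deriv_mul_tail_integral hs hsR
    (hasDerivAt_neg_one_add_sq_rpow (l : ℝ))
    (continuous_const.mul (continuous_id.div (hpow _) fun t => (Real.rpow_pos_of_pos (hpos t) _).ne'))
    hgc
  have hug : ∀ t : ℝ, -(1 + t ^ 2) ^ (-((l : ℝ) / 2)) * g t = -(t * ζ t / (1 + t ^ 2)) := by
    intro t
    have h : (1 + t ^ 2) ^ (-((l : ℝ) / 2)) * (1 + t ^ 2) ^ ((l : ℝ) / 2 - 1) = (1 + t ^ 2)⁻¹ := by
      rw [← Real.rpow_add (hpos t), ← Real.rpow_neg_one]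
      congr 1
      ring
    rw [div_eq_mul_inv (t * ζ t), ← h]
    simp only [hg]
    ring
  simp only [hug, intervalIntegral.integral_neg, mul_assoc,
    intervalIntegral.integral_const_mul] at hparts
  have houter : ∫ t in Ioi s, t / (1 + t ^ 2) ^ ((l : ℝ) / 2 + 1) * ∫ r in Ioi t, g r =
      ∫ t in s..R, t / (1 + t ^ 2) ^ ((l : ℝ) / 2 + 1) * ∫ r in t..R, g r := by
    rw [integral_Ioi_eq_intervalIntegral_of_eq_zero hsR]
    · refine intervalIntegral.integral_congr fun t ht => ?_
      rw [uIcc_of_le hsR] at ht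
      simp only [integral_Ioi_eq_intervalIntegral_of_eq_zero ht.2 hg0]
    · intro t ht
      have hzero : ∫ r in Ioi t, g r = 0 :=
        setIntegral_eq_zero_of_forall_eq_zero fun x hx => hg0 x (ht.trans (le_of_lt hx))
      rw [hzero, mul_zero]
  rw [houter, integral_Ioi_eq_intervalIntegral_of_eq_zero hsR hg0,
    integral_Ioi_eq_intervalIntegral_of_eq_zero hsR fun x hx => by simp [hζ x hx]]
  linear_combination (l : ℝ) * hparts
end

section
/- Let n ≥ 3 and let ξ : ℝ^n → ℝ^n be continuous with compact support. Then ξ satisfies ξ(ϑx) = ϑ ξ(x) for every ϑ ∈ SO(n) and every x ∈ ℝ^n \ {0}, if and only if there exists α ∈ T_n^n such that ξ(x) = α(|x|) x for every x ∈ ℝ^n \ {0}. -/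
open MeasureTheory Filter Set

open scoped Topology

open Module in
/-- In dimension at least three, any two vectors have a common nonzero orthogonal vector. -/
theorem exists_ne_zero_inner_eq_zero {V : Type*} [NormedAddCommGroup V] [InnerProductSpace ℝ V]
    [FiniteDimensional ℝ V] (hV : 3 ≤ finrank ℝ V) (x y : V) :
    ∃ u : V, u ≠ 0 ∧ inner ℝ u x = 0 ∧ inner ℝ u y = 0 := by
  classical
  set K : Submodule ℝ V := Submodule.span ℝ (({x, y} : Finset V) : Set V)
  have hle : finrank ℝ K ≤ 2 := (finrank_span_finset_le_card _).trans Finset.card_le_two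
  have hadd := K.finrank_add_finrank_orthogonal
  have hbot : Kᗮ ≠ ⊥ := fun h => by
    rw [h, finrank_bot] at hadd
    omega
  obtain ⟨u, hu, hu0⟩ := Submodule.exists_mem_ne_zero_of_ne_bot hbot
  exact ⟨u, hu0, Submodule.inner_left_of_mem_orthogonal (Submodule.subset_span (by simp)) hu,
    Submodule.inner_left_of_mem_orthogonal (Submodule.subset_span (by simp)) hu⟩

/-- The composition of two hyperplane reflections has determinant one. -/
theorem det_reflection_trans_reflection {V : Type*} [NormedAddCommGroup V]
    [InnerProductSpace ℝ V] [FiniteDimensional ℝ V] {u v : V} (hu : u ≠ 0) (hv : v ≠ 0) :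
    LinearMap.det (((ℝ ∙ u)ᗮ.reflection.trans (ℝ ∙ v)ᗮ.reflection).toLinearEquiv : V →ₗ[ℝ] V)
      = 1 := by
  have key : ∀ w : V, w ≠ 0 →
      LinearMap.det ((ℝ ∙ w)ᗮ.reflection.toLinearEquiv : V →ₗ[ℝ] V) = -1 := fun w hw => by
    refine (Submodule.det_reflection _).trans ?_
    rw [Submodule.orthogonal_orthogonal, finrank_span_singleton hw, pow_one]
  have hcomp : (((ℝ ∙ u)ᗮ.reflection.trans (ℝ ∙ v)ᗮ.reflection).toLinearEquiv : V →ₗ[ℝ] V) =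
      ((ℝ ∙ v)ᗮ.reflection.toLinearEquiv : V →ₗ[ℝ] V) ∘ₗ
        ((ℝ ∙ u)ᗮ.reflection.toLinearEquiv : V →ₗ[ℝ] V) := rfl
  rw [hcomp, LinearMap.det_comp, key u hu, key v hv]
  norm_num

theorem reflection_orthogonal_singleton_of_inner_eq_zero {V : Type*} [NormedAddCommGroup V]
    [InnerProductSpace ℝ V] {u x : V} (h : inner ℝ u x = 0) : (ℝ ∙ u)ᗮ.reflection x = x :=
  Submodule.reflection_mem_subspace_eq_self (Submodule.mem_orthogonal_singleton_iff_inner_right.2 h)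

/-- Rotations act transitively on spheres in dimension at least three. -/
theorem exists_rotation_apply_eq {V : Type*} [NormedAddCommGroup V] [InnerProductSpace ℝ V]
    [FiniteDimensional ℝ V] (hV : 3 ≤ Module.finrank ℝ V) {x y : V} (h : ‖x‖ = ‖y‖) :
    ∃ ϑ : V ≃ₗᵢ[ℝ] V, LinearMap.det (ϑ.toLinearEquiv : V →ₗ[ℝ] V) = 1 ∧ ϑ x = y := by
  rcases eq_or_ne x y with rfl | hxy
  · exact ⟨LinearIsometryEquiv.refl ℝ V, LinearMap.det_id, rfl⟩
  · obtain ⟨u, hu, huy, -⟩ := exists_ne_zero_inner_eq_zero hV y y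
    refine ⟨_, det_reflection_trans_reflection (sub_ne_zero.2 hxy) hu, ?_⟩
    rw [LinearIsometryEquiv.trans_apply, Submodule.reflection_sub h,
      reflection_orthogonal_singleton_of_inner_eq_zero huy]

/-- In dimension at least three, a vector fixed by every rotation fixing the nonzero vector `x`
is a multiple of `x`. -/
theorem eq_smul_of_forall_rotation_fixed {V : Type*} [NormedAddCommGroup V]
    [InnerProductSpace ℝ V] [FiniteDimensional ℝ V] (hV : 3 ≤ Module.finrank ℝ V) {x y : V}
    (hx : x ≠ 0)
    (h : ∀ ϑ : V ≃ₗᵢ[ℝ] V, LinearMap.det (ϑ.toLinearEquiv : V →ₗ[ℝ] V) = 1 → ϑ x = x → ϑ y = y) :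
    y = (inner ℝ x y / inner ℝ x x) • x := by
  set c : ℝ := inner ℝ x y / inner ℝ x x with hc
  by_contra hne
  have hw : y - c • x ≠ 0 := sub_ne_zero.2 hne
  have hxx : inner ℝ x x ≠ 0 := inner_self_ne_zero.2 hx
  have hwx : inner ℝ (y - c • x) x = 0 := by
    rw [inner_sub_left, real_inner_smul_left, hc, div_mul_cancel₀ _ hxx, real_inner_comm, sub_self]
  obtain ⟨u, hu, hux, huw⟩ := exists_ne_zero_inner_eq_zero hV x (y - c • x)
  set ϑ := (ℝ ∙ u)ᗮ.reflection.trans (ℝ ∙ (y - c • x))ᗮ.reflection with hϑ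
  have hϑx : ϑ x = x := by
    rw [hϑ, LinearIsometryEquiv.trans_apply, reflection_orthogonal_singleton_of_inner_eq_zero hux,
      reflection_orthogonal_singleton_of_inner_eq_zero hwx]
  have hϑw : ϑ (y - c • x) = -(y - c • x) := by
    rw [hϑ, LinearIsometryEquiv.trans_apply, reflection_orthogonal_singleton_of_inner_eq_zero huw,
      Submodule.reflection_orthogonalComplement_singleton_eq_neg]
  rw [map_sub, map_smul, hϑx, h ϑ (det_reflection_trans_reflection hu hw) hϑx] at hϑw
  have : IsAddTorsionFree V := .of_isTorsionFree ℝ V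
  exact hw (self_eq_neg.1 hϑw)

/-- A continuous map with `ξ x = α ‖x‖ • x` away from the origin vanishes at the origin. -/
theorem map_zero_of_eq_radial_smul {V : Type*} [NormedAddCommGroup V] [NormedSpace ℝ V]
    [Nontrivial V] {ξ : V → V} (hξ : Continuous ξ) {α : ℝ → ℝ}
    (h : ∀ x : V, x ≠ 0 → ξ x = α ‖x‖ • x) : ξ 0 = 0 := by
  have : (𝓝[≠] (0 : V)).NeBot := Module.punctured_nhds_neBot ℝ V 0
  have hodd : (fun x => ξ (-x)) = fun x => -ξ x := by
    refine Continuous.ext_on (dense_compl_singleton (0 : V)) (by fun_prop) (by fun_prop) ?_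
    intro x hx
    have hx0 : x ≠ 0 := hx
    simp only [h x hx0, h (-x) (neg_ne_zero.2 hx0), norm_neg, smul_neg]
  have h0 := congrFun hodd 0
  simp only [neg_zero] at h0
  have : IsAddTorsionFree V := .of_isTorsionFree ℝ V
  exact self_eq_neg.1 h0

/-- The radial profile of a continuous, compactly supported, radial-multiple vector field. -/
theorem memT_radial_profile {V : Type*} [NormedAddCommGroup V] [InnerProductSpace ℝ V] (n : ℕ)
    {ξ : V → V} (hc : Continuous ξ) (hs : HasCompactSupport ξ) (h0 : ξ 0 = 0) {e : V}
    (he : ‖e‖ = 1) : MemT n n fun s => inner ℝ e (ξ (s • e)) / s := by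
  have hcont : Continuous fun s : ℝ => inner ℝ e (ξ (s • e)) := by fun_prop
  refine ⟨hcont.continuousOn.div continuousOn_id fun s hs => (mem_Ioi.1 hs).ne', ?_, ?_⟩
  · obtain ⟨R, hR⟩ := hs.isCompact.isBounded.subset_closedBall 0
    refine ⟨max R 0 + 1, fun s hle => ?_⟩
    have hsR : R < s := by linarith [le_max_left R 0]
    have hs0 : 0 < s := by linarith [le_max_right R 0]
    have hz : ξ (s • e) = 0 := image_eq_zero_of_notMem_tsupport fun hmem => by
      have := mem_closedBall_zero_iff.1 (hR hmem)
      rw [norm_smul, he, mul_one, Real.norm_of_nonneg hs0.le] at this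
      linarith
    simp [hz]
  · have hlim : Tendsto (fun s : ℝ => inner ℝ e (ξ (s • e))) (𝓝[>] 0) (𝓝 0) := by
      have := hcont.tendsto 0
      simp only [zero_smul, h0, inner_zero_right] at this
      exact this.mono_left nhdsWithin_le_nhds
    refine hlim.congr' ?_
    filter_upwards [self_mem_nhdsWithin] with s hs
    have : s ≠ 0 := (mem_Ioi.1 hs).ne'
    simp only [Nat.sub_self, zero_add, pow_one]
    field_simp

/-- For `n ≥ 3`, a continuous `ξ : ℝⁿ → ℝⁿ` with compact support commutes with all
rotations (linear isometries of determinant one) on `ℝⁿ \ {0}` if and only if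
`ξ(x) = α(|x|) x` for some `α ∈ T_n^n`. -/
theorem stmt9 (n : ℕ) (hn : 3 ≤ n)
    (ξ : EuclideanSpace ℝ (Fin n) → EuclideanSpace ℝ (Fin n))
    (hc : Continuous ξ) (hs : HasCompactSupport ξ) :
    (∀ ϑ : EuclideanSpace ℝ (Fin n) ≃ₗᵢ[ℝ] EuclideanSpace ℝ (Fin n),
        LinearMap.det (ϑ.toLinearEquiv :
          EuclideanSpace ℝ (Fin n) →ₗ[ℝ] EuclideanSpace ℝ (Fin n)) = 1 →
        ∀ x : EuclideanSpace ℝ (Fin n), x ≠ 0 → ξ (ϑ x) = ϑ (ξ x)) ↔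
      ∃ α : ℝ → ℝ, MemT n n α ∧
        ∀ x : EuclideanSpace ℝ (Fin n), x ≠ 0 → ξ x = α ‖x‖ • x := by
  constructor
  · intro h
    have hV : 3 ≤ Module.finrank ℝ (EuclideanSpace ℝ (Fin n)) := by simpa using hn
    have : Nontrivial (EuclideanSpace ℝ (Fin n)) :=
      Module.nontrivial_of_finrank_pos (R := ℝ) (by omega)
    obtain ⟨e, he⟩ := exists_norm_eq (EuclideanSpace ℝ (Fin n)) zero_le_one
    have hradial : ∀ x : EuclideanSpace ℝ (Fin n), x ≠ 0 →
        ξ x = (inner ℝ e (ξ (‖x‖ • e)) / ‖x‖) • x := by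
      intro x hx
      have hr : ‖x‖ ≠ 0 := norm_ne_zero_iff.2 hx
      have hre : ‖x‖ • e ≠ 0 := smul_ne_zero hr (norm_ne_zero_iff.1 (by rw [he]; exact one_ne_zero))
      have hmul := eq_smul_of_forall_rotation_fixed hV hre (y := ξ (‖x‖ • e))
        fun ϑ hϑ hfix => by rw [← h ϑ hϑ _ hre, hfix]
      have hcoef : inner ℝ (‖x‖ • e) (ξ (‖x‖ • e)) / inner ℝ (‖x‖ • e) (‖x‖ • e) =
          inner ℝ e (ξ (‖x‖ • e)) / ‖x‖ := by
        rw [real_inner_self_eq_norm_sq, norm_smul, he, norm_norm, real_inner_smul_left]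
        field_simp
      rw [hcoef] at hmul
      obtain ⟨ϑ, hϑ, hϑx⟩ := exists_rotation_apply_eq hV (x := ‖x‖ • e) (y := x)
        (by rw [norm_smul, he, norm_norm, mul_one])
      have hrot := h ϑ hϑ _ hre
      rw [hϑx, hmul, map_smul, hϑx] at hrot
      exact hrot
    have h0 : ξ 0 = 0 :=
      map_zero_of_eq_radial_smul hc (α := fun s => inner ℝ e (ξ (s • e)) / s) hradial
    exact ⟨_, memT_radial_profile n hc hs h0 he, hradial⟩
  · rintro ⟨α, -, hα⟩ ϑ - x hx
    rw [hα x hx, hα (ϑ x) (by simpa using hx), ϑ.norm_map, map_smul]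
end

section
/- Let n ≥ 2 and let ξ : ℝ^n → ℝ^n be continuous with compact support. Then ξ satisfies ξ(ϑx) = ϑ ξ(x) for every ϑ ∈ O(n) and every x ∈ ℝ^n \ {0}, if and only if there exists α ∈ T_n^n such that ξ(x) = α(|x|) x for every x ∈ ℝ^n \ {0}. -/
open MeasureTheory Filter Set

section OrthogonalEquivariance

variable {E : Type*} [NormedAddCommGroup E] [InnerProductSpace ℝ E]

/-- A vector field that commutes with linear isometries away from the origin is radial. -/
theorem mem_span_singleton_of_equivariant {ξ : E → E}
    (h : ∀ ϑ : E ≃ₗᵢ[ℝ] E, ∀ x : E, x ≠ 0 → ξ (ϑ x) = ϑ (ξ x)) {x : E} (hx : x ≠ 0) :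
    ξ x ∈ Submodule.span ℝ {x} := by
  rw [← Submodule.reflection_eq_self_iff, ← h _ x hx,
    Submodule.reflection_mem_subspace_eq_self (Submodule.mem_span_singleton_self x)]

/-- The radial coefficient of an equivariant vector field depends only on the norm. -/
theorem eq_inner_div_smul_of_equivariant {ξ : E → E}
    (h : ∀ ϑ : E ≃ₗᵢ[ℝ] E, ∀ x : E, x ≠ 0 → ξ (ϑ x) = ϑ (ξ x)) {e : E} (he : ‖e‖ = 1)
    {x : E} (hx : x ≠ 0) :
    ξ x = (inner ℝ (ξ (‖x‖ • e)) e / ‖x‖) • x := by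
  have hx' : ‖x‖ ≠ 0 := norm_ne_zero_iff.2 hx
  have he0 : e ≠ 0 := norm_ne_zero_iff.1 (by simp [he])
  have hy : ‖x‖ • e ≠ 0 := smul_ne_zero hx' he0
  obtain ⟨c, hc⟩ := Submodule.mem_span_singleton.1 (mem_span_singleton_of_equivariant h hy)
  have hnorm : ‖‖x‖ • e‖ = ‖x‖ := by simp [norm_smul, he]
  have hϑ := Submodule.reflection_sub hnorm
  have hξ := h (Submodule.reflection (Submodule.span ℝ {‖x‖ • e - x})ᗮ) _ hy
  rw [hϑ, ← hc, map_smul, hϑ] at hξ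
  have hcoef : inner ℝ (ξ (‖x‖ • e)) e / ‖x‖ = c := by
    rw [← hc]
    simp [real_inner_smul_left, he, hx']
  rw [hcoef, hξ]

/-- A continuous equivariant vector field vanishes at the origin. -/
theorem map_zero_of_equivariant [Nontrivial E] {ξ : E → E} (hc : Continuous ξ)
    (h : ∀ ϑ : E ≃ₗᵢ[ℝ] E, ∀ x : E, x ≠ 0 → ξ (ϑ x) = ϑ (ξ x)) : ξ 0 = 0 := by
  have := Module.punctured_nhds_neBot ℝ E (0 : E)
  have hodd : (fun x => ξ (-x)) = fun x => -ξ x :=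
    (hc.comp continuous_neg).ext_on (dense_compl_singleton (0 : E)) hc.neg
      fun x hx => h (LinearIsometryEquiv.neg ℝ) x hx
  have : IsAddTorsionFree E := .of_isTorsionFree ℝ E
  have h0 := congrFun hodd 0
  simp only [neg_zero] at h0
  exact self_eq_neg.1 h0

end OrthogonalEquivariance

/-- For `n ≥ 2`, a continuous `ξ : ℝⁿ → ℝⁿ` with compact support commutes with all
orthogonal maps (linear isometries) on `ℝⁿ \ {0}` if and only if
`ξ(x) = α(|x|) x` for some `α ∈ T_n^n`. -/
theorem stmt10 (n : ℕ) (hn : 2 ≤ n)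
    (ξ : EuclideanSpace ℝ (Fin n) → EuclideanSpace ℝ (Fin n))
    (hc : Continuous ξ) (hs : HasCompactSupport ξ) :
    (∀ ϑ : EuclideanSpace ℝ (Fin n) ≃ₗᵢ[ℝ] EuclideanSpace ℝ (Fin n),
        ∀ x : EuclideanSpace ℝ (Fin n), x ≠ 0 → ξ (ϑ x) = ϑ (ξ x)) ↔
      ∃ α : ℝ → ℝ, MemT n n α ∧
        ∀ x : EuclideanSpace ℝ (Fin n), x ≠ 0 → ξ x = α ‖x‖ • x := by
  constructor
  · intro h
    have : Nonempty (Fin n) := ⟨⟨0, by omega⟩⟩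
    obtain ⟨e, he⟩ := exists_norm_eq (EuclideanSpace ℝ (Fin n)) zero_le_one
    have hg : Continuous fun s : ℝ => inner ℝ (ξ (s • e)) e := by fun_prop
    refine ⟨fun s => inner ℝ (ξ (s • e)) e / s, ⟨?_, ?_, ?_⟩,
      fun x hx => eq_inner_div_smul_of_equivariant h he hx⟩
    · exact hg.continuousOn.div continuousOn_id fun s hs => ne_of_gt hs
    · obtain ⟨R, hR⟩ := hs.isCompact.isBounded.exists_norm_le
      refine ⟨R + 1, fun s hs' => ?_⟩
      have hzero : ξ (s • e) = 0 := by
        by_contra hne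
        have hle := hR _ (subset_tsupport ξ hne)
        rw [norm_smul, he, mul_one, Real.norm_eq_abs] at hle
        linarith [le_abs_self s]
      simp [hzero]
    · have hlim : Tendsto (fun s : ℝ => inner ℝ (ξ (s • e)) e) (nhdsWithin 0 (Ioi 0))
          (nhds 0) := by
        have := hg.tendsto 0
        simp only [zero_smul, map_zero_of_equivariant hc h, inner_zero_left] at this
        exact this.mono_left nhdsWithin_le_nhds
      refine hlim.congr' ?_
      filter_upwards [self_mem_nhdsWithin] with s hs'
      have hs0 : s ≠ 0 := ne_of_gt hs'
      simp only [Nat.sub_self, zero_add, pow_one]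
      field_simp
  · rintro ⟨α, -, hα⟩ ϑ x hx
    rw [hα x hx, hα (ϑ x) (by simpa using hx), ϑ.norm_map, map_smul]
end

section
/- Let ψ̃ : ℝ → ℝ be infinitely differentiable with compact support, and set ξ(t) = ψ̃(t²). Then there exists an infinitely differentiable function ψ : ℝ → ℝ with compact support such that for every s > 0: −(1/π) ∫_s^∞ ξ′(t)/√(t²−s²) dt = ψ(s²), where ξ′(t) = 2t ψ̃′(t²). Equivalently, −(2/π) ∫_0^∞ ψ̃′(s²+r²) dr = ψ(s²) for every s > 0. -/
open MeasureTheory Filter Set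

/-- Differentiation under the integral sign for `u ↦ ∫ r in (0, ∞), g (u + r ^ 2)`. -/
theorem hasDerivAt_integral_Ioi_comp_add_sq {g : ℝ → ℝ} (hg : ContDiff ℝ 1 g)
    (hc : HasCompactSupport g) (u : ℝ) :
    HasDerivAt (fun x => ∫ r in Ioi (0 : ℝ), g (x + r ^ 2))
      (∫ r in Ioi (0 : ℝ), deriv g (u + r ^ 2)) u := by
  have hg' : Continuous (deriv g) := hg.continuous_deriv le_rfl
  obtain ⟨C, hC⟩ := hg'.bounded_above_of_compact_support hc.deriv
  obtain ⟨D, hD⟩ := hg.continuous.bounded_above_of_compact_support hc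
  obtain ⟨M, hM⟩ := hc.isCompact.isBounded.subset_closedBall 0
  have hvanish : ∀ x ∈ Metric.ball u 1, ∀ r ∈ Ioi (0 : ℝ), r ∉ Icc (0 : ℝ) (|M| + |u| + 2) →
      x + r ^ 2 ∉ tsupport g := by
    intro x hx r hr hrR hmem
    have h1 := hM hmem
    rw [mem_closedBall_zero_iff, Real.norm_eq_abs, abs_le] at h1
    rw [Metric.mem_ball, Real.dist_eq, abs_lt] at hx
    simp only [mem_Icc, not_and, not_le] at hrR
    have h2 := hrR (le_of_lt hr)
    have h3 := le_abs_self M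
    have h4 := neg_abs_le u
    nlinarith [abs_nonneg M, abs_nonneg u]
  have hbound : ∀ (h : ℝ → ℝ) (B : ℝ), (∀ x, ‖h x‖ ≤ B) → Function.support h ⊆ tsupport g →
      ∀ r ∈ Ioi (0 : ℝ), ∀ x ∈ Metric.ball u 1,
        ‖h (x + r ^ 2)‖ ≤ (Icc (0 : ℝ) (|M| + |u| + 2)).indicator (fun _ => B) r := by
    intro h B hB hs r hr x hx
    by_cases hrR : r ∈ Icc (0 : ℝ) (|M| + |u| + 2)
    · rw [indicator_of_mem hrR]
      exact hB _
    · have : h (x + r ^ 2) = 0 := by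
        by_contra hne
        exact hvanish x hx r hr hrR (hs hne)
      rw [indicator_of_notMem hrR, this, norm_zero]
  have hint : ∀ B : ℝ, Integrable ((Icc (0 : ℝ) (|M| + |u| + 2)).indicator (fun _ => B))
      (volume.restrict (Ioi (0 : ℝ))) := fun B =>
    ((integrable_indicator_iff measurableSet_Icc).2
      (integrableOn_const (by simp))).restrict
  have hcont : ∀ x : ℝ, Continuous fun r : ℝ => g (x + r ^ 2) := fun x =>
    hg.continuous.comp (by fun_prop)
  refine (hasDerivAt_integral_of_dominated_loc_of_deriv_le (μ := volume.restrict (Ioi (0 : ℝ)))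
    (F := fun x r => g (x + r ^ 2)) (F' := fun x r => deriv g (x + r ^ 2))
    (bound := (Icc (0 : ℝ) (|M| + |u| + 2)).indicator (fun _ => C))
    (Metric.ball_mem_nhds u one_pos)
    (Eventually.of_forall fun x => (hcont x).aestronglyMeasurable) ?_ ?_ ?_ (hint C) ?_).2
  · refine (hint D).mono' (hcont u).aestronglyMeasurable ?_
    filter_upwards [ae_restrict_mem measurableSet_Ioi] with r hr
    exact hbound g D hD (subset_tsupport g) r hr u (Metric.mem_ball_self one_pos)
  · exact (hg'.comp (by fun_prop : Continuous fun r : ℝ => u + r ^ 2)).aestronglyMeasurable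
  · filter_upwards [ae_restrict_mem measurableSet_Ioi] with r hr
    exact hbound (deriv g) C hC support_deriv_subset r hr
  · refine Eventually.of_forall fun r x _ => ?_
    exact ((hg.differentiable one_ne_zero) (x + r ^ 2)).hasDerivAt.comp_add_const x (r ^ 2)

theorem contDiff_integral_Ioi_comp_add_sq {g : ℝ → ℝ} (hg : ContDiff ℝ (⊤ : ℕ∞) g)
    (hc : HasCompactSupport g) :
    ContDiff ℝ (⊤ : ℕ∞) (fun x => ∫ r in Ioi (0 : ℝ), g (x + r ^ 2)) := by
  refine contDiff_infty.2 fun n => ?_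
  induction n generalizing g with
  | zero =>
    exact contDiff_zero.2 (continuous_iff_continuousAt.2 fun u =>
      (hasDerivAt_integral_Ioi_comp_add_sq (hg.of_le (by exact_mod_cast le_top)) hc
        u).continuousAt)
  | succ n ih =>
    have hd := hasDerivAt_integral_Ioi_comp_add_sq (hg.of_le (by exact_mod_cast le_top)) hc
    have hderiv := funext fun u => (hd u).deriv
    rw [Nat.cast_succ, contDiff_succ_iff_deriv]
    refine ⟨fun u => (hd u).differentiableAt, by simp, ?_⟩
    rw [hderiv]
    exact ih (contDiff_infty_iff_deriv.1 hg).2 hc.deriv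

theorem image_sqrt_sq_add_sq_Ioi {s : ℝ} (hs : 0 < s) :
    (fun r => Real.sqrt (s ^ 2 + r ^ 2)) '' Ioi 0 = Ioi s := by
  ext t
  constructor
  · rintro ⟨r, hr, rfl⟩
    exact Real.lt_sqrt_of_sq_lt (lt_add_of_pos_right _ (pow_pos hr 2))
  · intro ht
    have ht' : s < t := ht
    have hpos : 0 < t ^ 2 - s ^ 2 := by nlinarith
    refine ⟨Real.sqrt (t ^ 2 - s ^ 2), Real.sqrt_pos.2 hpos, ?_⟩
    simp only [Real.sq_sqrt hpos.le, add_sub_cancel]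
    exact Real.sqrt_sq (hs.trans ht').le

/-- The substitution `t = √(s² + r²)` in the inverse Abel transform. -/
theorem integral_Ioi_deriv_comp_sq_div_sqrt {f : ℝ → ℝ} (hf : Differentiable ℝ f) {s : ℝ}
    (hs : 0 < s) :
    ∫ t in Ioi s, deriv (fun r => f (r ^ 2)) t / Real.sqrt (t ^ 2 - s ^ 2) =
      2 * ∫ r in Ioi (0 : ℝ), deriv f (s ^ 2 + r ^ 2) := by
  have hpos : ∀ r : ℝ, 0 < s ^ 2 + r ^ 2 := fun r => by positivity
  have hderiv : ∀ r ∈ Ioi (0 : ℝ), HasDerivWithinAt (fun r => Real.sqrt (s ^ 2 + r ^ 2))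
      (r / Real.sqrt (s ^ 2 + r ^ 2)) (Ioi 0) r := by
    intro r _
    have h := (((hasDerivAt_pow 2 r).const_add (s ^ 2)).sqrt (hpos r).ne').hasDerivWithinAt
      (s := Ioi 0)
    simpa [mul_div_mul_left] using h
  have hinj : InjOn (fun r => Real.sqrt (s ^ 2 + r ^ 2)) (Ioi 0) := by
    intro a ha b hb hab
    have h := (Real.sqrt_inj (hpos a).le (hpos b).le).1 hab
    exact (pow_left_inj₀ (le_of_lt ha) (le_of_lt hb) two_ne_zero).1 (add_left_cancel h)
  have hcomp : ∀ t : ℝ, deriv (fun r => f (r ^ 2)) t = deriv f (t ^ 2) * (2 * t) := fun t => by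
    simpa [Function.comp_def] using ((hf (t ^ 2)).hasDerivAt.comp t (hasDerivAt_pow 2 t)).deriv
  rw [← image_sqrt_sq_add_sq_Ioi hs,
    integral_image_eq_integral_abs_deriv_smul measurableSet_Ioi hderiv hinj,
    ← integral_const_mul]
  refine setIntegral_congr_fun measurableSet_Ioi fun r hr => ?_
  have hr' : 0 < r := hr
  have hq := Real.sqrt_pos.2 (hpos r)
  simp only [hcomp, Real.sq_sqrt (hpos r).le, add_sub_cancel_left, Real.sqrt_sq hr'.le,
    abs_of_pos (div_pos hr' hq), smul_eq_mul]
  field_simp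

/-- If `ψ̃` is smooth with compact support and `ξ(t) = ψ̃(t²)`, then the inverse Abel
transform of `ξ` is of the form `s ↦ ψ(s²)` for a smooth, compactly supported `ψ`. -/
theorem stmt11 (ψt : ℝ → ℝ) (hψt : ContDiff ℝ (⊤ : ℕ∞) ψt) (hsupp : HasCompactSupport ψt) :
    ∃ ψ : ℝ → ℝ, ContDiff ℝ (⊤ : ℕ∞) ψ ∧ HasCompactSupport ψ ∧
      (∀ s > (0:ℝ),
        -(1 / Real.pi) *
            ∫ t in Set.Ioi s, deriv (fun r => ψt (r ^ 2)) t / Real.sqrt (t ^ 2 - s ^ 2) =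
          ψ (s ^ 2)) ∧
      (∀ s > (0:ℝ),
        -(2 / Real.pi) * ∫ r in Set.Ioi (0:ℝ), deriv ψt (s ^ 2 + r ^ 2) = ψ (s ^ 2)) := by
  have hψt' := contDiff_infty_iff_deriv.1 hψt
  have hval : ∀ s > (0 : ℝ),
      -(2 / Real.pi) * ∫ r in Ioi (0 : ℝ), deriv ψt (s ^ 2 + r ^ 2) =
        Real.smoothTransition (s ^ 2 + 1) *
          (-(2 / Real.pi) * ∫ r in Ioi (0 : ℝ), deriv ψt (s ^ 2 + r ^ 2)) := by
    intro s _
    rw [Real.smoothTransition.one_of_one_le (by nlinarith [sq_nonneg s]), one_mul]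
  refine ⟨fun u => Real.smoothTransition (u + 1) *
    (-(2 / Real.pi) * ∫ r in Ioi (0 : ℝ), deriv ψt (u + r ^ 2)), ?_, ?_, ?_, hval⟩
  · exact (Real.smoothTransition.contDiff.comp (contDiff_id.add contDiff_const)).mul
      (contDiff_const.mul (contDiff_integral_Ioi_comp_add_sq hψt'.2 hsupp.deriv))
  · obtain ⟨M, hM⟩ := hsupp.isCompact.isBounded.subset_closedBall 0
    refine HasCompactSupport.intro (isCompact_Icc (a := -1) (b := M)) fun u hu => ?_
    rcases le_or_gt u (-1) with h | h
    · rw [Real.smoothTransition.zero_of_nonpos (by linarith), zero_mul]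
    · have hMu : M < u := by
        by_contra hle
        exact hu ⟨h.le, not_lt.1 hle⟩
      have hzero : ∀ r : ℝ, deriv ψt (u + r ^ 2) = 0 := by
        intro r
        by_contra hne
        have hmem := hM (support_deriv_subset hne)
        rw [mem_closedBall_zero_iff, Real.norm_eq_abs, abs_le] at hmem
        nlinarith [sq_nonneg r]
      simp [hzero]
  · intro s hs
    rw [integral_Ioi_deriv_comp_sq_div_sqrt hψt'.1 hs]
    refine Eq.trans ?_ (hval s hs)
    ring
end

section
/- Let n ≥ 1, i ∈ {1,…,n}, and let α ∈ T_n^n, i.e. α : (0,∞) → ℝ is continuous with bounded support and lim_{s→0⁺} s α(s) = 0. Define ξ : ℝ^n → ℝ by ξ(x) = α(|x|) x_i for x ≠ 0 and ξ(0) = 0. Then ξ is infinitely differentiable on ℝ^n if and only if there exists an infinitely differentiable function ψ : ℝ → ℝ with compact support such that α(s) = ψ(s²) for every s > 0. -/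
open MeasureTheory Filter Set

open scoped Topology ContDiff

theorem iteratedDeriv_eq_of_hasDerivAt_succ {G : ℕ → ℝ → ℝ}
    (h : ∀ k x, HasDerivAt (G k) (G (k + 1) x) x) (k : ℕ) : iteratedDeriv k (G 0) = G k := by
  induction k with
  | zero => exact iteratedDeriv_zero
  | succ k ih => rw [iteratedDeriv_succ, ih]; exact funext fun x => (h k x).deriv

theorem contDiff_infty_of_hasDerivAt_succ {G : ℕ → ℝ → ℝ}
    (h : ∀ k x, HasDerivAt (G k) (G (k + 1) x) x) : ContDiff ℝ ∞ (G 0) := by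
  refine contDiff_of_differentiable_iteratedDeriv fun k _ => ?_
  rw [iteratedDeriv_eq_of_hasDerivAt_succ h]
  exact fun x => (h k x).differentiableAt

theorem ContDiff.hasDerivAt_iteratedDeriv {f : ℝ → ℝ} (hf : ContDiff ℝ ∞ f) (k : ℕ) (x : ℝ) :
    HasDerivAt (iteratedDeriv k f) (iteratedDeriv (k + 1) f x) x := by
  rw [iteratedDeriv_succ]
  exact (hf.differentiable_iteratedDeriv k (by exact_mod_cast ENat.natCast_lt_top k) x).hasDerivAt

theorem hasDerivAt_integral_pow_mul_comp_mul {p p' : ℝ → ℝ} (hp : ∀ x, HasDerivAt p (p' x) x)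
    (hp' : Continuous p') (k : ℕ) (x : ℝ) :
    HasDerivAt (fun x => ∫ s in (0 : ℝ)..1, s ^ k * p (x * s))
      (∫ s in (0 : ℝ)..1, s ^ (k + 1) * p' (x * s)) x := by
  have hpc : Continuous p := continuous_iff_continuousAt.2 fun x => (hp x).continuousAt
  obtain ⟨C, hC⟩ := ((isCompact_Icc (a := x - 1) (b := x + 1)).prod
    (isCompact_Icc (a := (0 : ℝ)) (b := 1))).exists_bound_of_continuousOn
    (f := fun q : ℝ × ℝ => q.2 ^ (k + 1) * p' (q.1 * q.2)) (by fun_prop)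
  refine (intervalIntegral.hasDerivAt_integral_of_dominated_loc_of_deriv_le
    (F := fun x s => s ^ k * p (x * s)) (F' := fun x s => s ^ (k + 1) * p' (x * s))
    (bound := fun _ => C) (Icc_mem_nhds (sub_one_lt x) (lt_add_one x))
    (Eventually.of_forall fun y => ?_) ?_ ?_ ?_ ?_ ?_).2
  · exact Continuous.aestronglyMeasurable (by fun_prop)
  · exact Continuous.intervalIntegrable (by fun_prop) _ _
  · exact Continuous.aestronglyMeasurable (by fun_prop)
  · refine Eventually.of_forall fun s hs y hy => hC (y, s) ⟨hy, ?_⟩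
    rw [uIoc_of_le zero_le_one] at hs
    exact Ioc_subset_Icc_self hs
  · exact intervalIntegrable_const
  · refine Eventually.of_forall fun s _ y _ => ?_
    have := ((hp (y * s)).comp y (hasDerivAt_mul_const s)).const_mul (s ^ k)
    exact this.congr_deriv (by ring)

theorem dslope_zero_eq_integral {f : ℝ → ℝ} (hf : ContDiff ℝ 1 f) (t : ℝ) :
    dslope f 0 t = ∫ s in (0 : ℝ)..1, deriv f (t * s) := by
  rcases eq_or_ne t 0 with rfl | ht
  · simp
  · rw [dslope_of_ne _ ht, intervalIntegral.integral_comp_mul_left _ ht, mul_zero, mul_one,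
      intervalIntegral.integral_deriv_eq_sub (fun x _ => hf.differentiable one_ne_zero x)
        ((hf.continuous_deriv le_rfl).intervalIntegrable _ _), slope_def_field]
    simp [div_eq_inv_mul]

/-- **Hadamard's lemma** in one variable. -/
theorem ContDiff.dslope_zero {f : ℝ → ℝ} (hf : ContDiff ℝ ∞ f) : ContDiff ℝ ∞ (dslope f 0) := by
  have key := contDiff_infty_of_hasDerivAt_succ
    (G := fun k x => ∫ s in (0 : ℝ)..1, s ^ k * iteratedDeriv (k + 1) f (x * s))
    fun k x => hasDerivAt_integral_pow_mul_comp_mul (hf.hasDerivAt_iteratedDeriv (k + 1))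
      (continuous_iff_continuousAt.2 fun y =>
        (hf.hasDerivAt_iteratedDeriv (k + 2) y).continuousAt) k x
  convert key using 1
  funext t
  rw [dslope_zero_eq_integral (hf.of_le (by exact_mod_cast le_top))]
  simp [iteratedDeriv_one]

theorem exists_contDiff_hasCompactSupport_iteratedDeriv_zero (k : ℕ) :
    ∃ φ : ℝ → ℝ, ContDiff ℝ ∞ φ ∧ HasCompactSupport φ ∧
      ∀ j, iteratedDeriv j φ 0 = if j = k then 1 else 0 := by
  let χ : ContDiffBump (0 : ℝ) := ⟨1, 2, one_pos, one_lt_two⟩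
  refine ⟨fun x => (k.factorial : ℝ)⁻¹ * x ^ k * χ x, ?_, χ.hasCompactSupport.mul_left, fun j => ?_⟩
  · exact (contDiff_const.mul (contDiff_id.pow k)).mul χ.contDiff
  · have : (fun x => (k.factorial : ℝ)⁻¹ * x ^ k * χ x) =ᶠ[𝓝 0]
        fun x => (k.factorial : ℝ)⁻¹ * x ^ k := by
      filter_upwards [χ.eventuallyEq_one] with x hx
      simp [hx]
    rw [this.iteratedDeriv_eq, iteratedDeriv_const_mul_field, iteratedDeriv_fun_pow_zero]
    split_ifs with h1 <;> simp_all [Nat.factorial_ne_zero]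

theorem exists_contDiff_iteratedDeriv_zero_eq_and_bound (a : ℝ) (k : ℕ) :
    ∃ f : ℝ → ℝ, ContDiff ℝ ∞ f ∧ (∀ j, iteratedDeriv j f 0 = if j = k then a else 0) ∧
      ∃ v : ℕ → ℝ, (∀ j x, ‖iteratedFDeriv ℝ j f x‖ ≤ v j) ∧ ∀ j < k, v j = (1 / 2) ^ k := by
  obtain ⟨φ, hφ, hφc, hφ0⟩ := exists_contDiff_hasCompactSupport_iteratedDeriv_zero k
  have hbound : ∀ j, ∃ C, ∀ x, ‖iteratedFDeriv ℝ j φ x‖ ≤ C := fun j =>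
    (hφc.iteratedFDeriv j).exists_bound_of_continuous
      (hφ.continuous_iteratedFDeriv (by exact_mod_cast le_top))
  choose B hB using hbound
  simp only [norm_iteratedFDeriv_eq_norm_iteratedDeriv] at hB
  have hB0 : ∀ j, 0 ≤ B j := fun j => (norm_nonneg _).trans (hB j 0)
  obtain ⟨M, hM0, hBM⟩ : ∃ M, 0 ≤ M ∧ ∀ j < k, B j ≤ M :=
    ⟨∑ j ∈ Finset.range k, B j, Finset.sum_nonneg fun j _ => hB0 j, fun j hj =>
      Finset.single_le_sum (fun i _ => hB0 i) (Finset.mem_range.2 hj)⟩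
  obtain ⟨l, hl, hlM⟩ : ∃ l : ℝ, 1 ≤ l ∧ |a| * M * 2 ^ k ≤ l :=
    ⟨max 1 (|a| * M * 2 ^ k), le_max_left _ _, le_max_right _ _⟩
  have hl0 : 0 < l := one_pos.trans_le hl
  have hfd : ∀ j x, iteratedDeriv j (fun x => a / l ^ k * φ (l * x)) x =
      a / l ^ k * (l ^ j * iteratedDeriv j φ (l * x)) := fun j x => by
    rw [iteratedDeriv_const_mul_field, iteratedDeriv_comp_const_mul
      (hφ.of_le (by exact_mod_cast le_top))]
  refine ⟨fun x => a / l ^ k * φ (l * x),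
    contDiff_const.mul (hφ.comp (contDiff_const.mul contDiff_id)), fun j => ?_,
    fun j => if j < k then (1 / 2 : ℝ) ^ k else |a| / l ^ k * (l ^ j * B j), fun j x => ?_,
    fun j hj => if_pos hj⟩
  · rw [hfd, mul_zero, hφ0]
    split_ifs with h
    · subst h
      field_simp
    · simp
  · rw [norm_iteratedFDeriv_eq_norm_iteratedDeriv, hfd, norm_mul, norm_mul, norm_div, norm_pow,
      norm_pow, Real.norm_eq_abs a, Real.norm_of_nonneg hl0.le]
    have h1 : |a| / l ^ k * (l ^ j * ‖iteratedDeriv j φ (l * x)‖) ≤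
        |a| / l ^ k * (l ^ j * B j) := by
      gcongr
      exact hB j _
    refine h1.trans ?_
    dsimp only
    split_ifs with hjk
    · rw [div_mul_eq_mul_div, div_le_iff₀ (by positivity)]
      calc |a| * (l ^ j * B j) ≤ |a| * (l ^ j * M) := by gcongr; exact hBM j hjk
        _ = (1 / 2) ^ k * (l ^ j * (|a| * M * 2 ^ k)) := by
            rw [one_div, inv_pow]; field_simp
        _ ≤ (1 / 2) ^ k * (l ^ j * l) := by gcongr
        _ = (1 / 2) ^ k * l ^ (j + 1) := by rw [pow_succ]
        _ ≤ (1 / 2) ^ k * l ^ k := by gcongr; exact hjk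
    · exact le_rfl

/-- **Borel's lemma** in one variable. -/
theorem exists_contDiff_iteratedDeriv_zero_eq (a : ℕ → ℝ) :
    ∃ b : ℝ → ℝ, ContDiff ℝ ∞ b ∧ ∀ k, iteratedDeriv k b 0 = a k := by
  choose f hf hf0 v hfv hv using fun k =>
    exists_contDiff_iteratedDeriv_zero_eq_and_bound (a k) k
  have hsum : ∀ j, Summable fun k => v k j := fun j => by
    refine summable_geometric_two.congr_cofinite ?_
    rw [Nat.cofinite_eq_atTop]
    filter_upwards [eventually_gt_atTop j] with k hk using (hv k j hk).symm
  have hN : ∀ j : ℕ, (j : ℕ∞) ≤ ⊤ → Summable fun k => v k j := fun j _ => hsum j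
  have hb : ∀ (j k : ℕ) (x : ℝ), (j : ℕ∞) ≤ ⊤ → ‖iteratedFDeriv ℝ j (f k) x‖ ≤ v k j :=
    fun j k x _ => hfv k j x
  refine ⟨fun x => ∑' k, f k x, contDiff_tsum hf hN hb, fun j => ?_⟩
  have hs : Summable fun k => iteratedFDeriv ℝ j (f k) 0 :=
    (hsum j).of_norm_bounded fun k => hfv k j 0
  have hD : iteratedFDeriv ℝ j (fun x => ∑' k, f k x) 0 = ∑' k, iteratedFDeriv ℝ j (f k) 0 :=
    iteratedFDeriv_tsum_apply hf hN hb le_top 0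
  calc iteratedDeriv j (fun x => ∑' k, f k x) 0
      = (∑' k, iteratedFDeriv ℝ j (f k) 0) fun _ => 1 := by
        rw [iteratedDeriv_eq_iteratedFDeriv, hD]
    _ = ∑' k, iteratedDeriv j (f k) 0 := by
        simp only [iteratedDeriv_eq_iteratedFDeriv]
        exact (ContinuousMultilinearMap.hasSum_eval hs.hasSum _).tsum_eq.symm
    _ = a j := by
        simp only [hf0]
        rw [tsum_eq_single j fun k hk => if_neg hk.symm, if_pos rfl]

theorem Function.Even.deriv_odd {g : ℝ → ℝ} (hg : g.Even) : (deriv g).Odd := fun t => by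
  have h := deriv_comp_neg g t
  rw [show (fun x => g (-x)) = g from funext hg] at h
  rw [h, neg_neg]

theorem Function.Odd.dslope_zero_even {f : ℝ → ℝ} (hf : f.Odd) : (dslope f 0).Even := fun t => by
  rcases eq_or_ne t 0 with rfl | ht
  · simp
  · rw [dslope_of_ne _ ht, dslope_of_ne _ (neg_ne_zero.2 ht), slope_def_field, slope_def_field,
      hf t, hf.map_zero]
    simp [neg_div_neg_eq]

/-- If `g` is smooth and even then `u ↦ g √u` has derivative `u ↦ evenDeriv g √u` for `u > 0`. -/
noncomputable def evenDeriv (g : ℝ → ℝ) : ℝ → ℝ := fun t => dslope (deriv g) 0 t / 2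

theorem contDiff_even_evenDeriv_iterate {g : ℝ → ℝ} (hg : ContDiff ℝ ∞ g) (he : g.Even) (k : ℕ) :
    ContDiff ℝ ∞ (evenDeriv^[k] g) ∧ (evenDeriv^[k] g).Even := by
  induction k with
  | zero => exact ⟨hg, he⟩
  | succ k ih =>
    rw [Function.iterate_succ_apply']
    refine ⟨(contDiff_infty_iff_deriv.1 ih.1).2.dslope_zero.div_const 2, fun t => ?_⟩
    simp only [evenDeriv]
    rw [ih.2.deriv_odd.dslope_zero_even]

theorem hasDerivAt_comp_sqrt {g : ℝ → ℝ} (hg : Differentiable ℝ g) (he : g.Even) {u : ℝ}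
    (hu : 0 < u) : HasDerivAt (fun u => g √u) (evenDeriv g √u) u := by
  have hs : √u ≠ 0 := (Real.sqrt_pos.2 hu).ne'
  refine ((hg √u).hasDerivAt.comp u (Real.hasDerivAt_sqrt hu.ne')).congr_deriv ?_
  simp only [evenDeriv]
  rw [dslope_of_ne _ hs, slope_def_field, he.deriv_odd.map_zero]
  field_simp
  ring

/-- **Whitney's theorem**: a smooth even function is a smooth function of the square. -/
theorem Function.Even.exists_contDiff_comp_sq {g : ℝ → ℝ} (he : g.Even) (hg : ContDiff ℝ ∞ g) :
    ∃ ψ : ℝ → ℝ, ContDiff ℝ ∞ ψ ∧ ∀ t, g t = ψ (t ^ 2) := by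
  have hk := contDiff_even_evenDeriv_iterate hg he
  obtain ⟨b, hb, hb0⟩ := exists_contDiff_iteratedDeriv_zero_eq fun k => (evenDeriv^[k] g) 0
  let G : ℕ → ℝ → ℝ := fun k u =>
    (evenDeriv^[k] g) √u + (iteratedDeriv k b (min u 0) - iteratedDeriv k b 0)
  have hGc : ∀ k, Continuous (G k) := fun k =>
    ((hk k).1.continuous.comp Real.continuous_sqrt).add
      (((hb.continuous_iteratedDeriv k (by exact_mod_cast le_top)).comp
        (continuous_id.min continuous_const)).sub continuous_const)
  have hpos : ∀ k u, 0 ≤ u → G k u = (evenDeriv^[k] g) √u := fun k u hu => by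
    simp [G, min_eq_right hu]
  have hneg : ∀ k u, u ≤ 0 → G k u = iteratedDeriv k b u := fun k u hu => by
    simp [G, min_eq_left hu, Real.sqrt_eq_zero_of_nonpos hu, hb0]
  have hGd : ∀ k u, u ≠ 0 → HasDerivAt (G k) (G (k + 1) u) u := fun k u hu => by
    rcases hu.lt_or_gt with hu | hu
    · rw [hneg _ _ hu.le]
      refine (hb.hasDerivAt_iteratedDeriv k u).congr_of_eventuallyEq ?_
      filter_upwards [Iio_mem_nhds hu] with y hy using hneg k y (le_of_lt hy)
    · rw [hpos _ _ hu.le, Function.iterate_succ_apply']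
      refine (hasDerivAt_comp_sqrt ((hk k).1.differentiable (by simp)) (hk k).2
        hu).congr_of_eventuallyEq ?_
      filter_upwards [Ioi_mem_nhds hu] with y hy using hpos k y (le_of_lt hy)
  refine ⟨G 0, contDiff_infty_of_hasDerivAt_succ fun k u => hasDerivAt_of_hasDerivAt_of_ne'
    (hGd k) (hGc k).continuousAt (hGc (k + 1)).continuousAt u, fun t => ?_⟩
  rw [hpos 0 _ (sq_nonneg t), Real.sqrt_sq_eq_abs]
  rcases abs_choice t with h | h <;> simp [h, he t]

/-- For `α ∈ T_n^n`, the map `x ↦ α(|x|) xᵢ` (which equals `0` at `x = 0`) is smooth on `ℝⁿ`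
if and only if `α(s) = ψ(s²)` for some smooth, compactly supported `ψ`. -/
theorem stmt13 (n : ℕ) (hn : 1 ≤ n) (i : Fin n) (α : ℝ → ℝ) (hα : MemT n n α) :
    ContDiff ℝ (⊤ : ℕ∞) (fun x : EuclideanSpace ℝ (Fin n) => α ‖x‖ * x i) ↔
      ∃ ψ : ℝ → ℝ, ContDiff ℝ (⊤ : ℕ∞) ψ ∧ HasCompactSupport ψ ∧ ∀ s > (0:ℝ), α s = ψ (s ^ 2) := by
  constructor
  · intro h
    obtain ⟨-, ⟨R, hR⟩, -⟩ := hα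
    have hf : ContDiff ℝ ∞ fun t : ℝ => α |t| * t := by
      have hline : ContDiff ℝ ∞ fun t : ℝ => t • EuclideanSpace.single i (1 : ℝ) :=
        contDiff_id.smul contDiff_const
      convert h.comp hline using 1
      funext t
      simp [norm_smul]
    have hodd : Function.Odd fun t : ℝ => α |t| * t := fun t => by simp
    obtain ⟨ψ, hψ, hψα⟩ := hodd.dslope_zero_even.exists_contDiff_comp_sq hf.dslope_zero
    have hψs : ∀ s > (0 : ℝ), α s = ψ (s ^ 2) := fun s hs => by
      rw [← hψα, dslope_of_ne _ hs.ne', slope_def_field, abs_of_pos hs]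
      simp [hs.ne']
    let χ : ContDiffBump (0 : ℝ) :=
      ⟨R ^ 2 + 1, R ^ 2 + 2, by positivity, by linarith⟩
    refine ⟨fun u => ψ u * χ u, hψ.mul χ.contDiff, χ.hasCompactSupport.mul_left, fun s hs => ?_⟩
    rcases le_total R s with hRs | hRs
    · simp [← hψs s hs, hR s hRs]
    · have hχ : χ (s ^ 2) = 1 := by
        refine χ.one_of_mem_closedBall ?_
        have : s ^ 2 ≤ R ^ 2 := by gcongr
        simp only [χ, Metric.mem_closedBall, dist_zero_right, Real.norm_eq_abs, abs_sq]
        linarith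
      simp [hχ, hψs s hs]
  · rintro ⟨ψ, hψ, -, hα⟩
    have hξ : ContDiff ℝ ∞ fun x : EuclideanSpace ℝ (Fin n) => ψ (‖x‖ ^ 2) * x i :=
      (hψ.comp (contDiff_norm_sq ℝ)).mul (EuclideanSpace.proj (𝕜 := ℝ) i).contDiff
    convert hξ using 1
    funext x
    rcases eq_or_ne x 0 with rfl | hx
    · simp
    · rw [hα _ (norm_pos_iff.2 hx)]
end

section
/- Let n ≥ 1, i ∈ {1,…,n}, and let ψ : (0,∞) → ℝ be twice continuously differentiable with bounded support. Define F : ℝ^n \ {0} → ℝ^n by F(x) = ψ′(|x|) x_i x + (ψ(|x|)|x| + ∫_{|x|}^∞ ψ(t) dt) e_i. Then for all l, m ∈ {1,…,n} and every x ∈ ℝ^n \ {0}, the partial derivative ∂F_l/∂x_m (x) equals (ψ″(|x|)/|x|) x_i x_l x_m + ψ′(|x|)(δ_{lm} x_i + δ_{im} x_l + δ_{il} x_m); in particular, the Jacobian matrix of F is symmetric at every x ≠ 0. -/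
open MeasureTheory Filter Set

/-- The tail integral of a function continuous on `(0,∞)` with bounded support is an
antiderivative of its negative. -/
theorem hasDerivAt_integral_Ioi_of_bddSupp {f : ℝ → ℝ} (hf : ContinuousOn f (Ioi 0))
    (hb : BddSupp f) {r : ℝ} (hr : 0 < r) :
    HasDerivAt (fun s => ∫ t in Ioi s, f t) (-f r) r := by
  obtain ⟨R, hR⟩ := hb
  have hrM : r < max R (r + 1) := lt_max_of_lt_right (lt_add_one r)
  have hint : IntervalIntegrable f volume r (max R (r + 1)) := by
    refine (hf.mono fun t ht => ?_).intervalIntegrable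
    rw [uIcc_of_le hrM.le] at ht
    exact hr.trans_le ht.1
  refine (intervalIntegral.integral_hasDerivAt_left hint
    (hf.stronglyMeasurableAtFilter isOpen_Ioi r hr)
    (hf.continuousAt (Ioi_mem_nhds hr))).congr_of_eventuallyEq ?_
  filter_upwards [Iio_mem_nhds hrM] with s hs
  rw [intervalIntegral.integral_of_le (le_of_lt hs)]
  refine setIntegral_eq_of_subset_of_forall_sdiff_eq_zero measurableSet_Ioi
    Ioc_subset_Ioi_self fun t ht => hR t ?_
  by_contra! h
  exact ht.2 ⟨ht.1, h.le.trans (le_max_left _ _)⟩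

/-- The norm of a real inner product space is differentiable away from the origin. -/
theorem hasFDerivAt_norm_of_ne_zero {E : Type*} [NormedAddCommGroup E] [InnerProductSpace ℝ E]
    {x : E} (hx : x ≠ 0) :
    HasFDerivAt (fun y : E => ‖y‖) (‖x‖⁻¹ • innerSL ℝ x) x := by
  have hn : ‖x‖ ≠ 0 := norm_ne_zero_iff.mpr hx
  have h := (hasStrictFDerivAt_norm_sq x).hasFDerivAt.sqrt (pow_ne_zero 2 hn)
  simp only [Real.sqrt_sq (norm_nonneg _)] at h
  refine h.congr_fderiv ?_
  ext v
  simp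
  field_simp

/-- The partial derivatives of a coordinate of
`x ↦ ψ'(|x|) xᵢ x + (ψ(|x|)|x| + ∫_{|x|}^∞ ψ(t) dt) eᵢ` away from the origin. -/
theorem fderiv_radial_field_apply_single {n : ℕ} {i : Fin n} {ψ : ℝ → ℝ}
    (hψ : ContDiffOn ℝ 2 ψ (Ioi 0)) (hb : BddSupp ψ)
    {F : EuclideanSpace ℝ (Fin n) → EuclideanSpace ℝ (Fin n)}
    (hF : ∀ x : EuclideanSpace ℝ (Fin n), x ≠ 0 →
      F x = (deriv ψ ‖x‖ * x i) • x +
        (ψ ‖x‖ * ‖x‖ + ∫ t in Ioi ‖x‖, ψ t) • EuclideanSpace.single i 1)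
    (l m : Fin n) {x : EuclideanSpace ℝ (Fin n)} (hx : x ≠ 0) :
    fderiv ℝ (fun y : EuclideanSpace ℝ (Fin n) => F y l) x (EuclideanSpace.single m 1) =
      deriv (deriv ψ) ‖x‖ / ‖x‖ * x i * x l * x m +
        deriv ψ ‖x‖ *
          ((if l = m then (1:ℝ) else 0) * x i + (if i = m then (1:ℝ) else 0) * x l +
            (if i = l then (1:ℝ) else 0) * x m) := by
  have hr : 0 < ‖x‖ := norm_pos_iff.mpr hx
  have hmem : Ioi (0 : ℝ) ∈ nhds ‖x‖ := Ioi_mem_nhds hr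
  have hψ₁ : HasDerivAt ψ (deriv ψ ‖x‖) ‖x‖ :=
    ((hψ.contDiffAt hmem).differentiableAt (by norm_num)).hasDerivAt
  have hψ₂ : HasDerivAt (deriv ψ) (deriv (deriv ψ) ‖x‖) ‖x‖ :=
    (((hψ.deriv_of_isOpen (m := 1) isOpen_Ioi (by norm_num)).contDiffAt hmem).differentiableAt
      (by norm_num)).hasDerivAt
  have hcoef : HasDerivAt (fun r => ψ r * r + ∫ t in Ioi r, ψ t) (deriv ψ ‖x‖ * ‖x‖) ‖x‖ := by
    refine ((hψ₁.mul (hasDerivAt_id ‖x‖)).add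
      (hasDerivAt_integral_Ioi_of_bddSupp hψ.continuousOn hb hr)).congr_deriv ?_
    simp
  have hnorm := hasFDerivAt_norm_of_ne_zero hx
  have hcoord (j : Fin n) := (EuclideanSpace.proj (𝕜 := ℝ) j).hasFDerivAt (x := x)
  have hsum := (((hψ₂.comp_hasFDerivAt x hnorm).mul (hcoord i)).mul (hcoord l)).add
    ((hcoef.comp_hasFDerivAt x hnorm).mul_const (if l = i then (1 : ℝ) else 0))
  have heq : (fun y => F y l) =ᶠ[nhds x] fun y => deriv ψ ‖y‖ * y i * y l +
      (ψ ‖y‖ * ‖y‖ + ∫ t in Ioi ‖y‖, ψ t) * (if l = i then (1 : ℝ) else 0) := by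
    filter_upwards [isOpen_ne.mem_nhds hx] with y hy
    simp [hF y hy]
  rw [(hsum.congr_of_eventuallyEq heq).fderiv]
  simp only [eq_comm (a := l) (b := i)]
  generalize (if i = l then (1 : ℝ) else 0) = c
  split_ifs <;> simp [EuclideanSpace.inner_single_right, *] <;> field_simp <;> ring

/-- The partial derivatives of the vector field
`F(x) = ψ'(|x|) xᵢ x + (ψ(|x|)|x| + ∫_{|x|}^∞ ψ(t) dt) eᵢ` on `ℝⁿ \ {0}`;
in particular its Jacobian matrix is symmetric there. -/
theorem stmt16 (n : ℕ) (hn : 1 ≤ n) (i : Fin n) (ψ : ℝ → ℝ)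
    (hψ : ContDiffOn ℝ 2 ψ (Set.Ioi 0)) (hb : BddSupp ψ)
    (F : EuclideanSpace ℝ (Fin n) → EuclideanSpace ℝ (Fin n))
    (hF : ∀ x : EuclideanSpace ℝ (Fin n), x ≠ 0 →
      F x = (deriv ψ ‖x‖ * x i) • x +
        (ψ ‖x‖ * ‖x‖ + ∫ t in Set.Ioi ‖x‖, ψ t) • EuclideanSpace.single i 1) :
    ∀ l m : Fin n, ∀ x : EuclideanSpace ℝ (Fin n), x ≠ 0 →
      (fderiv ℝ (fun y : EuclideanSpace ℝ (Fin n) => F y l) x (EuclideanSpace.single m 1) =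
          deriv (deriv ψ) ‖x‖ / ‖x‖ * x i * x l * x m +
            deriv ψ ‖x‖ *
              ((if l = m then (1:ℝ) else 0) * x i + (if i = m then (1:ℝ) else 0) * x l +
                (if i = l then (1:ℝ) else 0) * x m)) ∧
        fderiv ℝ (fun y : EuclideanSpace ℝ (Fin n) => F y l) x (EuclideanSpace.single m 1) =
          fderiv ℝ (fun y : EuclideanSpace ℝ (Fin n) => F y m) x (EuclideanSpace.single l 1) := by
  intro l m x hx
  have h (l m : Fin n) := fderiv_radial_field_apply_single hψ hb hF l m hx
  refine ⟨h l m, ?_⟩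
  rw [h l m, h m l]
  simp only [eq_comm (a := m) (b := l)]
  ring
end
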